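/- arXiv:1312.1939 — 2 statements merged into one kernel-verified Lean document; each statement's English description precedes it below -/
import Mathlib

section
/- Let λ > 0 and q₋ < x₀ < 0 < q₊. Define F_ε = {x₀ + ε·B(1/(2λ)) > 0} and, on F_ε, Q_ε = (1/λ)·ln((x₀ + ε·B(1/(2λ)))/(x₀ + ε·B((1 − e^{−2λθ_ε})/(2λ)))), where θ_ε = inf{t ≥ 0 : X_ε(t) = q₊} (which is finite almost surely on F_ε). Then the conditional law Law[Q_ε | F_ε] converges weakly to the Dirac measure at 0 as ε → 0⁺; equivalently, Q_ε converges to 0 in probability with respect to P(·|F_ε). -/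
open MeasureTheory ProbabilityTheory Filter Topology Set

/-- `B` is a standard Brownian motion (for times `t ≥ 0`) on the probability space `(Ω, P)`. -/
def IsBrownianMotion {Ω : Type*} [MeasurableSpace Ω] (P : Measure Ω) (B : ℝ → Ω → ℝ) : Prop :=
  (∀ t : ℝ, Measurable (B t)) ∧
  (∀ᵐ ω ∂P, B 0 ω = 0 ∧ ContinuousOn (fun t => B t ω) (Set.Ici (0 : ℝ))) ∧
  (∀ s t : ℝ, 0 ≤ s → s ≤ t →
    Measure.map (fun ω => B t ω - B s ω) P = gaussianReal 0 (Real.toNNReal (t - s))) ∧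
  (∀ t : ℕ → ℝ, Monotone t → (∀ i, 0 ≤ t i) →
    iIndepFun (fun i ω => B (t (i + 1)) ω - B (t i) ω) P)

/-!
Put `T = 1/(2λ)`, `N = x₀ + ε B(T)` and `u = e^{-λθ_ε}`, so that `Q_ε = λ⁻¹ ln (N / (q₊ u))`. Given
`F_ε = {N > 0}`, the Gaussian variable `B(T)` exceeds the high level `-x₀/ε` only by an amount of
order `ε`, so `N` is of exact order `ε²` with high conditional probability. The bridge obtained from
`B` by subtracting its chord on `[0, T]` is independent of `B(T)`, hence of `F_ε`, and at distance
`T s` from the right endpoint it is `O(s^γ)` for every `γ < 1/2`. Splitting `B` into chord and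
bridge, the hitting condition becomes

  `q₊ u = x₀ u² + (1 - u²) N + ε bridge(u²)`.

This first forces `u = O(ε)`. For `γ > 1/4` the bridge term is then `o(1) ε √u`, and
`ε √u ≤ ε² + u`, so `q₊ u = N (1 + o(1))` and `Q_ε → 0`.
-/

open scoped NNReal ENNReal

section General

variable {Ω : Type*} [MeasurableSpace Ω] {μ : Measure Ω}

lemma measure_le_of_ae_eventually_mem {S : Set Ω} {A : ℕ → Set Ω} {c : ℝ≥0∞}
    (hS : ∀ᵐ ω ∂μ, ω ∈ S → ∀ᶠ n in atTop, ω ∈ A n) (hA : ∀ n, μ (A n) ≤ c) : μ S ≤ c := by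
  have hmono : Monotone fun N => ⋂ n ≥ N, A n := fun N N' hN =>
    biInter_subset_biInter_left fun _ hn => hN.trans hn
  calc μ S ≤ μ (⋃ N, ⋂ n ≥ N, A n) := measure_mono_ae <| by
        filter_upwards [hS] with ω hω hωS
        obtain ⟨N, hN⟩ := eventually_atTop.1 (hω hωS)
        exact mem_iUnion.2 ⟨N, mem_iInter₂.2 hN⟩
    _ = ⨆ N, μ (⋂ n ≥ N, A n) := hmono.measure_iUnion
    _ ≤ c := iSup_le fun N => (measure_mono (biInter_subset_of_mem le_rfl)).trans (hA N)

lemma cond_apply_le_of_measure_inter_le {S A : Set Ω} {c : ℝ≥0∞} (hS : MeasurableSet S)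
    (h : μ (S ∩ A) ≤ c * μ S) : (μ[|S]) A ≤ c := by
  calc (μ[|S]) A = (μ S)⁻¹ * μ (S ∩ A) := cond_apply hS μ A
    _ ≤ (μ S)⁻¹ * (c * μ S) := by gcongr
    _ = c * ((μ S)⁻¹ * μ S) := by ring
    _ ≤ c := mul_le_of_le_one_right' (ENNReal.inv_mul_le_one _)

lemma cond_preimage_apply_of_hasLaw {𝓧 : Type*} [MeasurableSpace 𝓧] {ν : Measure 𝓧} {Y : Ω → 𝓧}
    (hY : HasLaw Y ν μ) (hYm : Measurable Y) {S A : Set 𝓧} (hS : MeasurableSet S)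
    (hA : MeasurableSet A) : (μ[|Y ⁻¹' S]) (Y ⁻¹' A) = (ν[|S]) A := by
  rw [cond_apply (hYm hS), cond_apply hS, ← preimage_inter, ← hY.map_eq, Measure.map_apply hYm hS,
    Measure.map_apply hYm (hS.inter hA)]

lemma martingale_sum_range_succ_of_iIndepFun {E : Type*} [NormedAddCommGroup E] [NormedSpace ℝ E]
    [CompleteSpace E] [SecondCountableTopology E] [MeasurableSpace E] [BorelSpace E]
    {ξ : ℕ → Ω → E} (hξm : ∀ i, StronglyMeasurable (ξ i)) (hξ : iIndepFun ξ μ)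
    (hint : ∀ i, Integrable (ξ i) μ) (hzero : ∀ i, μ[ξ i] = 0) :
    Martingale (fun n ω => ∑ i ∈ Finset.range (n + 1), ξ i ω) (Filtration.natural ξ hξm) μ := by
  have := hξ.isProbabilityMeasure
  refine martingale_of_condExp_sub_eq_zero_nat (fun n => ?_)
    (fun n => integrable_finsetSum _ fun i _ => hint i) fun n => ?_
  · refine Finset.stronglyMeasurable_fun_sum _ fun i hi => ?_
    exact (Filtration.stronglyAdapted_natural hξm i).mono
      ((Filtration.natural ξ hξm).mono (Finset.mem_range_succ_iff.1 hi))
  · have hincr : ((fun ω => ∑ i ∈ Finset.range (n + 1 + 1), ξ i ω) -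
        fun ω => ∑ i ∈ Finset.range (n + 1), ξ i ω) = ξ (n + 1) := by
      ext ω
      simp [Finset.sum_range_succ]
    rw [hincr]
    refine (iIndepFun.condExp_natural_ae_eq_of_lt hξm hξ n.lt_succ_self).trans ?_
    exact .of_forall fun _ => hzero (n + 1)

lemma measure_exists_le_of_submartingale [IsFiniteMeasure μ] {𝒢 : Filtration ℕ ‹MeasurableSpace Ω›}
    {f : ℕ → Ω → ℝ} (hf : Submartingale f 𝒢 μ) (hnonneg : 0 ≤ f) (n : ℕ) {x : ℝ} (hx : 0 < x) :
    μ {ω | ∃ k ≤ n, x ≤ f k ω} ≤ ENNReal.ofReal (μ[f n] / x) := by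
  lift x to ℝ≥0 using hx.le
  have hmax : {ω | (x : ℝ) ≤ (Finset.range (n + 1)).sup' Finset.nonempty_range_add_one
      fun k => f k ω} = {ω | ∃ k ≤ n, (x : ℝ) ≤ f k ω} := by
    ext ω
    simp [Finset.le_sup'_iff]
  have hdoob := maximal_ineq hf hnonneg (ε := x) n
  rw [hmax] at hdoob
  rw [ENNReal.ofReal_div_of_pos hx, ENNReal.le_div_iff_mul_le
    (Or.inl (ENNReal.ofReal_pos.2 hx).ne') (by simp), mul_comm, ENNReal.ofReal_coe_nnreal]
  exact hdoob.trans (ENNReal.ofReal_le_ofReal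
    (setIntegral_le_integral (hf.integrable n) (ae_of_all _ (hnonneg n))))

lemma measure_exists_le_abs_of_martingale [IsFiniteMeasure μ]
    {𝒢 : Filtration ℕ ‹MeasurableSpace Ω›} {f : ℕ → Ω → ℝ} (hf : Martingale f 𝒢 μ) (n : ℕ) {x : ℝ}
    (hx : 0 < x) : μ {ω | ∃ k ≤ n, x ≤ |f k ω|} ≤ ENNReal.ofReal ((∫ ω, |f n ω| ∂μ) / x) :=
  measure_exists_le_of_submartingale (f := fun n ω => |f n ω|)
    (hf.submartingale.sup hf.neg.submartingale) (fun _ _ => abs_nonneg _) n hx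

lemma integral_abs_le_sqrt_of_hasLaw_gaussianReal {Y : Ω → ℝ} {v : ℝ≥0}
    (hY : HasLaw Y (gaussianReal 0 v) μ) : ∫ ω, |Y ω| ∂μ ≤ √v := by
  have := hY.isProbabilityMeasure
  have hY2 : MemLp Y 2 μ := hY.hasGaussianLaw.memLp_two
  have hsq : ∫ ω, Y ω ^ 2 ∂μ = v := by
    rw [← variance_of_integral_eq_zero hY.aemeasurable
      (hY.integral_eq.trans integral_id_gaussianReal), hY.variance_eq, variance_id_gaussianReal]
  refine Real.le_sqrt_of_sq_le ?_
  calc (∫ ω, |Y ω| ∂μ) ^ 2 ≤ ∫ ω, |Y ω| ^ 2 ∂μ := by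
        exact sub_nonneg.1 ((variance_nonneg _ _).trans_eq (variance_eq_sub hY2.abs))
    _ = v := by simp only [sq_abs, hsq]

end General

lemma eventually_exists_lt_grid {f : ℝ → ℝ} {a b s x : ℝ} (hf : ContinuousOn f (Icc a b))
    (hs : s ∈ Icc a b) (hx : x < f s) :
    ∀ᶠ n : ℕ in atTop, ∃ k ≤ n, x < f (a + (b - a) * (k / n)) := by
  have hab : 0 ≤ b - a := sub_nonneg.2 (hs.1.trans hs.2)
  set r := (s - a) / (b - a)
  have hr0 : 0 ≤ r := div_nonneg (sub_nonneg.2 hs.1) hab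
  have hr1 : r ≤ 1 := div_le_one_of_le₀ (by linarith [hs.2]) hab
  have hrs : a + (b - a) * r = s := by
    rw [mul_div_cancel_of_imp' fun h => by linarith [hs.1, hs.2], add_sub_cancel]
  have hfloor : ∀ n : ℕ, ⌊r * n⌋₊ ≤ n := fun n =>
    Nat.floor_le_of_le (mul_le_of_le_one_left n.cast_nonneg hr1)
  have hgrid : Tendsto (fun n : ℕ => a + (b - a) * (⌊r * n⌋₊ / n)) atTop (𝓝[Icc a b] s) := by
    refine tendsto_nhdsWithin_iff.2 ⟨?_, .of_forall fun n => ?_⟩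
    · rw [← hrs]
      exact (((tendsto_nat_floor_mul_div_atTop hr0).comp
        tendsto_natCast_atTop_atTop).const_mul _).const_add _
    · have hle : (⌊r * n⌋₊ / n : ℝ) ≤ 1 := div_le_one_of_le₀ (mod_cast hfloor n) n.cast_nonneg
      exact ⟨le_add_of_nonneg_right (by positivity), by nlinarith⟩
  filter_upwards [((hf s hs).tendsto.comp hgrid).eventually_const_lt hx] with n hn
  exact ⟨_, hfloor n, hn⟩

/-- The bridge from `0` to `0` obtained from the path `f` on `[0, T]` by subtracting the chord, run
backwards in time: `s` is the fraction of `[0, T]` that is left. -/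
def reversedBridge (f : ℝ → ℝ) (T s : ℝ) : ℝ :=
  f (T * (1 - s)) - (1 - s) * f T

lemma exists_dyadic_lt_abs_sub {f : ℝ → ℝ} {T γ M s : ℝ} (hT : 0 ≤ T) (hγ : 0 ≤ γ) (hM : 0 ≤ M)
    (hs : s ∈ Ioc (0 : ℝ) 1) (hf : M * s ^ γ < |f T - f (T * (1 - s))|) :
    ∃ n : ℕ, ∃ u ∈ Icc (T * (1 - (1 / 2) ^ n)) T,
      M * ((1 / 2) ^ n / 2) ^ γ / 2 < |f u - f (T * (1 - (1 / 2) ^ n))| := by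
  obtain ⟨n, hn, hsn⟩ := exists_nat_pow_near_of_lt_one hs.1 hs.2
    (by norm_num : (0 : ℝ) < 1 / 2) (by norm_num)
  refine ⟨n, ?_⟩
  by_contra! hblock
  refine hf.not_ge ?_
  set r : ℝ := (1 / 2) ^ n with hr
  have hrs : r / 2 ≤ s := by rw [hr, div_eq_mul_one_div, ← pow_succ]; exact hn.le
  have hleft : T * (1 - s) ∈ Icc (T * (1 - r)) T :=
    ⟨by gcongr, mul_le_of_le_one_right hT (sub_le_self 1 hs.1.le)⟩
  calc |f T - f (T * (1 - s))|
      ≤ |f T - f (T * (1 - r))| + |f (T * (1 - r)) - f (T * (1 - s))| := abs_sub_le _ _ _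
    _ ≤ M * (r / 2) ^ γ / 2 + M * (r / 2) ^ γ / 2 := by
        rw [abs_sub_comm (f (T * (1 - r)))]
        exact add_le_add (hblock T ⟨hleft.1.trans hleft.2, le_rfl⟩) (hblock _ hleft)
    _ = M * (r / 2) ^ γ := add_halves _
    _ ≤ M * s ^ γ := by gcongr

lemma abs_reversedBridge_le {f : ℝ → ℝ} {T γ M s : ℝ} (hf0 : f 0 = 0) (hγ : γ ≤ 1) (hM : 0 ≤ M)
    (hf : ∀ s ∈ Ioc (0 : ℝ) 1, |f T - f (T * (1 - s))| ≤ M * s ^ γ) (hs : s ∈ Ioc (0 : ℝ) 1) :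
    |reversedBridge f T s| ≤ 2 * M * s ^ γ := by
  have hfT : |f T| ≤ M := by simpa [hf0] using hf 1 ⟨one_pos, le_rfl⟩
  have hsγ : s ≤ s ^ γ := Real.self_le_rpow_of_le_one hs.1.le hs.2 hγ
  calc |reversedBridge f T s| = |s * f T - (f T - f (T * (1 - s)))| := by
        rw [reversedBridge]; ring_nf
    _ ≤ |s * f T| + |f T - f (T * (1 - s))| := abs_sub _ _
    _ ≤ s * M + M * s ^ γ := by
        rw [abs_mul, abs_of_pos hs.1]
        gcongr
        · exact hs.1.le
        · exact hf s hs
    _ ≤ s ^ γ * M + M * s ^ γ := by gcongr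
    _ = 2 * M * s ^ γ := by ring

namespace IsBrownianMotion

variable {Ω : Type*} [MeasurableSpace Ω] {P : Measure Ω} {B : ℝ → Ω → ℝ}

lemma measurable (hB : IsBrownianMotion P B) (t : ℝ) : Measurable (B t) := hB.1 t

lemma ae_zero_and_continuousOn (hB : IsBrownianMotion P B) :
    ∀ᵐ ω ∂P, B 0 ω = 0 ∧ ContinuousOn (B · ω) (Ici 0) := hB.2.1

lemma iIndepFun_sub (hB : IsBrownianMotion P B) {t : ℕ → ℝ} (ht : Monotone t) (ht0 : 0 ≤ t 0) :
    iIndepFun (fun i ω => B (t (i + 1)) ω - B (t i) ω) P :=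
  hB.2.2.2 t ht fun i => ht0.trans (ht i.zero_le)

lemma hasLaw_sub (hB : IsBrownianMotion P B) {s t : ℝ} (hs : 0 ≤ s) (hst : s ≤ t) :
    HasLaw (fun ω => B t ω - B s ω) (gaussianReal 0 (t - s).toNNReal) P :=
  ⟨((hB.measurable t).sub (hB.measurable s)).aemeasurable, hB.2.2.1 s t hs hst⟩

lemma hasLaw_eval (hB : IsBrownianMotion P B) {t : ℝ} (ht : 0 ≤ t) :
    HasLaw (B t) (gaussianReal 0 t.toNNReal) P := by
  have hlaw := hB.hasLaw_sub le_rfl ht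
  rw [sub_zero] at hlaw
  refine hlaw.congr ?_
  filter_upwards [hB.ae_zero_and_continuousOn] with ω hω
  rw [hω.1, sub_zero]

lemma isProbabilityMeasure (hB : IsBrownianMotion P B) : IsProbabilityMeasure P :=
  (hB.hasLaw_eval le_rfl).isProbabilityMeasure

lemma isPreBrownianReal (hB : IsBrownianMotion P B) :
    IsPreBrownianReal (fun (t : ℝ≥0) ω => B t ω) P := by
  refine HasIndepIncrements.isPreBrownianReal_of_hasLaw (fun t => ?_)
    (hasIndepIncrements_iff_nat.2 fun t ht => ?_)
  · simpa only [Real.toNNReal_coe] using hB.hasLaw_eval t.coe_nonneg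
  · exact hB.iIndepFun_sub (fun _ _ hij => NNReal.coe_le_coe.2 (ht hij)) (t 0).coe_nonneg

lemma measure_exists_le_abs_sub_le (hB : IsBrownianMotion P B) {t : ℕ → ℝ} (ht : Monotone t)
    (ht0 : 0 ≤ t 0) (n : ℕ) {x : ℝ} (hx : 0 < x) :
    P {ω | ∃ k ≤ n, x ≤ |B (t k) ω - B (t 0) ω|} ≤ ENNReal.ofReal (√(t n - t 0) / x) := by
  have := hB.isProbabilityMeasure
  -- Repeating the time `t 0` makes the martingale start at `0`, at index `0`.
  let τ : ℕ → ℝ := fun i => t (i - 1)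
  have hτ : Monotone τ := fun i j hij => ht (Nat.sub_le_sub_right hij 1)
  let ξ : ℕ → Ω → ℝ := fun i ω => B (τ (i + 1)) ω - B (τ i) ω
  have hlaw : ∀ i, HasLaw (ξ i) (gaussianReal 0 (τ (i + 1) - τ i).toNNReal) P := fun i =>
    hB.hasLaw_sub (ht0.trans (ht (Nat.zero_le _))) (hτ i.le_succ)
  have hmart := martingale_sum_range_succ_of_iIndepFun (ξ := ξ)
    (fun i => ((hB.measurable _).sub (hB.measurable _)).stronglyMeasurable)
    (hB.iIndepFun_sub hτ ht0) (fun i => (hlaw i).hasGaussianLaw.integrable)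
    fun i => (hlaw i).integral_eq.trans integral_id_gaussianReal
  have hsum : ∀ n ω, ∑ i ∈ Finset.range (n + 1), ξ i ω = B (t n) ω - B (t 0) ω := fun n ω =>
    Finset.sum_range_sub (fun i => B (τ i) ω) (n + 1)
  simp only [hsum] at hmart
  refine (measure_exists_le_abs_of_martingale hmart n hx).trans ?_
  gcongr
  have habs := integral_abs_le_sqrt_of_hasLaw_gaussianReal (hB.hasLaw_sub ht0 (ht n.zero_le))
  rwa [Real.coe_toNNReal _ (sub_nonneg.2 (ht n.zero_le))] at habs

lemma measure_exists_mem_Icc_lt_abs_sub_le (hB : IsBrownianMotion P B) {a b : ℝ} (ha : 0 ≤ a)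
    (hab : a ≤ b) {x : ℝ} (hx : 0 < x) :
    P {ω | ∃ s ∈ Icc a b, x < |B s ω - B a ω|} ≤ ENNReal.ofReal (√(b - a) / x) := by
  have hba : 0 ≤ b - a := sub_nonneg.2 hab
  let t : ℕ → ℕ → ℝ := fun n k => a + (b - a) * (k / n)
  have ht : ∀ n, Monotone (t n) := fun n i j hij => by dsimp only [t]; gcongr
  have ht0 : ∀ n, t n 0 = a := fun n => by simp [t]
  refine measure_le_of_ae_eventually_mem
    (A := fun n => {ω | ∃ k ≤ n, x ≤ |B (t n k) ω - B (t n 0) ω|}) ?_ fun n => ?_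
  · filter_upwards [hB.ae_zero_and_continuousOn] with ω ⟨_, hcont⟩
    rintro ⟨s, hs, hxs⟩
    have hgrid := eventually_exists_lt_grid
      ((hcont.mono fun u hu => ha.trans hu.1).sub continuousOn_const).abs hs hxs
    filter_upwards [hgrid] with n ⟨k, hk, hxk⟩
    exact ⟨k, hk, by rw [ht0]; exact hxk.le⟩
  · refine (hB.measure_exists_le_abs_sub_le (ht n) ((ht0 n).symm ▸ ha) n hx).trans ?_
    have hlast : t n n - t n 0 ≤ b - a := by
      rw [ht0, add_sub_cancel_left]
      exact mul_le_of_le_one_right hba (div_self_le_one _)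
    gcongr

lemma measure_exists_mem_Icc_dyadic_lt_abs_sub_le (hB : IsBrownianMotion P B) {T γ M : ℝ}
    (hT : 0 ≤ T) (hM : 0 < M) (n : ℕ) :
    P {ω | ∃ u ∈ Icc (T * (1 - (1 / 2) ^ n)) T,
        M * ((1 / 2) ^ n / 2) ^ γ / 2 < |B u ω - B (T * (1 - (1 / 2) ^ n)) ω|} ≤
      ENNReal.ofReal (2 * 2 ^ γ * √T / M * ((1 / 2) ^ (1 / 2 - γ)) ^ n) := by
  set r : ℝ := (1 / 2) ^ n with hr
  have hr0 : 0 < r := by positivity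
  have hr1 : r ≤ 1 := pow_le_one₀ (by norm_num) (by norm_num)
  have hscale : ((1 / 2 : ℝ) ^ (1 / 2 - γ)) ^ n = √r / r ^ γ := by
    rw [Real.sqrt_eq_rpow, ← Real.rpow_sub hr0, hr, Real.rpow_pow_comm (by norm_num)]
  refine (hB.measure_exists_mem_Icc_lt_abs_sub_le (mul_nonneg hT (sub_nonneg.2 hr1))
    (mul_le_of_le_one_right hT (sub_le_self 1 hr0.le)) (by positivity)).trans_eq ?_
  rw [hscale, show T - T * (1 - r) = T * r by ring, Real.sqrt_mul hT,
    Real.div_rpow hr0.le zero_le_two]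
  congr 1
  field_simp

lemma exists_forall_measure_exists_rpow_lt_abs_sub_le (hB : IsBrownianMotion P B) {T γ : ℝ}
    (hT : 0 ≤ T) (hγ : 0 ≤ γ) (hγ' : γ < 1 / 2) : ∃ C, ∀ M > 0,
      P {ω | ∃ s ∈ Ioc (0 : ℝ) 1, M * s ^ γ < |B T ω - B (T * (1 - s)) ω|} ≤
        ENNReal.ofReal (C / M) := by
  set x : ℝ := (1 / 2) ^ (1 / 2 - γ)
  have hx0 : 0 ≤ x := by positivity
  have hx1 : x < 1 := Real.rpow_lt_one (by norm_num) (by norm_num) (sub_pos.2 hγ')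
  refine ⟨2 * 2 ^ γ * √T * (1 - x)⁻¹, fun M hM => ?_⟩
  calc P {ω | ∃ s ∈ Ioc (0 : ℝ) 1, M * s ^ γ < |B T ω - B (T * (1 - s)) ω|}
      ≤ P (⋃ n : ℕ, {ω | ∃ u ∈ Icc (T * (1 - (1 / 2) ^ n)) T,
          M * ((1 / 2) ^ n / 2) ^ γ / 2 < |B u ω - B (T * (1 - (1 / 2) ^ n)) ω|}) := by
        refine measure_mono fun ω ⟨s, hs, hlt⟩ => mem_iUnion.2 ?_
        exact exists_dyadic_lt_abs_sub (f := (B · ω)) hT hγ hM.le hs hlt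
    _ ≤ ∑' n : ℕ, ENNReal.ofReal (2 * 2 ^ γ * √T / M * x ^ n) :=
        (measure_iUnion_le _).trans (ENNReal.tsum_le_tsum fun n =>
          hB.measure_exists_mem_Icc_dyadic_lt_abs_sub_le hT hM n)
    _ = ENNReal.ofReal (2 * 2 ^ γ * √T * (1 - x)⁻¹ / M) := by
        rw [← ENNReal.ofReal_tsum_of_nonneg (fun n => by positivity)
          ((summable_geometric_of_lt_one hx0 hx1).mul_left _), tsum_mul_left,
          tsum_geometric_of_lt_one hx0 hx1, div_mul_eq_mul_div]

lemma exists_forall_measure_exists_rpow_lt_abs_reversedBridge_le (hB : IsBrownianMotion P B)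
    {T γ : ℝ} (hT : 0 ≤ T) (hγ : 0 ≤ γ) (hγ' : γ < 1 / 2) : ∃ C, ∀ M > 0,
      P {ω | ∃ s ∈ Ioc (0 : ℝ) 1, M * s ^ γ < |reversedBridge (B · ω) T s|} ≤
        ENNReal.ofReal (C / M) := by
  obtain ⟨C, hC⟩ := hB.exists_forall_measure_exists_rpow_lt_abs_sub_le hT hγ hγ'
  refine ⟨2 * C, fun M hM => ?_⟩
  rw [show 2 * C / M = C / (M / 2) by field_simp]
  refine le_trans (measure_mono_ae ?_) (hC (M / 2) (half_pos hM))
  filter_upwards [hB.ae_zero_and_continuousOn] with ω ⟨hω0, _⟩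
  rintro ⟨s, hs, hlt⟩
  by_contra! hincr
  refine hlt.not_ge ?_
  calc |reversedBridge (B · ω) T s| ≤ 2 * (M / 2) * s ^ γ :=
        abs_reversedBridge_le (f := (B · ω)) hω0 (hγ'.le.trans one_half_lt_one.le) (half_pos hM).le
          (fun s hs => not_lt.1 fun hlt => hincr ⟨s, hs, hlt⟩) hs
    _ = M * s ^ γ := by ring

lemma indepFun_reversedBridge (hB : IsBrownianMotion P B) {T : ℝ} (hT : 0 ≤ T) :
    IndepFun (fun ω (s : Icc (0 : ℝ) 1) => reversedBridge (B · ω) T s) (B T) P := by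
  have := hB.isProbabilityMeasure
  have hW := hB.isPreBrownianReal
  lift T to ℝ≥0 using hT
  let t : Icc (0 : ℝ) 1 → ℝ≥0 := fun s => ⟨T * (1 - s), mul_nonneg T.2 (sub_nonneg.2 s.2.2)⟩
  have htT : ∀ s, t s ≤ T := fun s => mul_le_of_le_one_right T.2 (sub_le_self 1 s.2.1)
  have hL2 : ∀ u : ℝ≥0, MemLp (B u) 2 P := fun u =>
    (hW.isGaussianProcess.hasGaussianLaw_eval u).memLp_two
  have hind : IndepFun (fun ω (s : Icc (0 : ℝ) 1) => B (t s) ω - (1 - s) * B T ω)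
      (fun ω (_ : Unit) => B T ω) P := by
    refine IsGaussianProcess.indepFun_of_covariance_eq_zero
      (hW.isGaussianProcess.of_isGaussianProcess ?_)
      (fun s => ((hB.measurable _).sub ((hB.measurable _).const_mul _)).aemeasurable)
      (fun _ => (hB.measurable _).aemeasurable) fun s _ => ?_
    · rintro (s | _)
      · exact ⟨{t s, T}, .proj ⟨t s, by simp⟩ - (1 - s : ℝ) • .proj ⟨T, by simp⟩, by simp⟩
      · exact ⟨{T}, .proj ⟨T, by simp⟩, by simp⟩
    · rw [covariance_fun_sub_left (hL2 _) ((hL2 _).const_mul _) (hL2 _),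
        covariance_const_mul_left, hW.covariance_fun_eval (t s) T, hW.covariance_fun_eval T T,
        min_self, min_eq_left (htT s)]
      exact sub_eq_zero.2 (mul_comm _ _)
  exact hind.comp measurable_id (measurable_pi_apply ())

lemma cond_exists_lt_abs_reversedBridge_le (hB : IsBrownianMotion P B) {T : ℝ} (hT : 0 ≤ T)
    {g : ℝ → ℝ} (hg : ContinuousOn g (Ioc 0 1)) {S : Set ℝ} (hS : MeasurableSet S) :
    (P[|B T ⁻¹' S]) {ω | ∃ s ∈ Ioc (0 : ℝ) 1, g s < |reversedBridge (B · ω) T s|} ≤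
      P {ω | ∃ s ∈ Ioc (0 : ℝ) 1, g s < |reversedBridge (B · ω) T s|} := by
  let d : ℕ → Icc (0 : ℝ) 1 := fun n =>
    inclusion Ioc_subset_Icc_self (TopologicalSpace.denseSeq (Ioc (0 : ℝ) 1) n)
  let bridge : Ω → Icc (0 : ℝ) 1 → ℝ := fun ω s => reversedBridge (B · ω) T s
  let G : Set (Icc (0 : ℝ) 1 → ℝ) := ⋃ n, {x | g (d n) < |x (d n)|}
  have hG : MeasurableSet G := .iUnion fun n =>
    measurableSet_lt measurable_const (measurable_pi_apply (d n)).abs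
  have hsub : {ω | ∃ s ∈ Ioc (0 : ℝ) 1, g s < |reversedBridge (B · ω) T s|} ≤ᵐ[P]
      bridge ⁻¹' G := by
    filter_upwards [hB.ae_zero_and_continuousOn] with ω ⟨_, hcont⟩
    rintro ⟨s, hs, hlt⟩
    have hbridge : ContinuousOn (reversedBridge (B · ω) T) (Ioc 0 1) :=
      (hcont.comp (f := fun s => T * (1 - s)) (by fun_prop)
        fun s hs => mul_nonneg hT (sub_nonneg.2 hs.2)).sub (by fun_prop)
    have hopen : IsOpen {s : Ioc (0 : ℝ) 1 | g s < |reversedBridge (B · ω) T s|} :=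
      isOpen_lt hg.domRestrict hbridge.abs.domRestrict
    obtain ⟨n, hn⟩ := (TopologicalSpace.denseRange_denseSeq _).exists_mem_open hopen ⟨⟨s, hs⟩, hlt⟩
    exact mem_iUnion.2 ⟨n, hn⟩
  refine cond_apply_le_of_measure_inter_le (hB.measurable T hS) ?_
  calc P (B T ⁻¹' S ∩ {ω | ∃ s ∈ Ioc (0 : ℝ) 1, g s < |reversedBridge (B · ω) T s|})
      ≤ P (bridge ⁻¹' G ∩ B T ⁻¹' S) := by
        rw [inter_comm]
        exact measure_mono_ae (hsub.inter .rfl)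
    _ = P (bridge ⁻¹' G) * P (B T ⁻¹' S) :=
        (hB.indepFun_reversedBridge hT).measure_inter_preimage_eq_mul _ _ hG hS
    _ ≤ P {ω | ∃ s ∈ Ioc (0 : ℝ) 1, g s < |reversedBridge (B · ω) T s|} * P (B T ⁻¹' S) := by
        gcongr
        intro ω hω
        obtain ⟨n, hn⟩ := mem_iUnion.1 hω
        exact ⟨d n, (TopologicalSpace.denseSeq (Ioc (0 : ℝ) 1) n).2, hn⟩

lemma exists_cond_exists_rpow_lt_abs_reversedBridge_le (hB : IsBrownianMotion P B) {T γ κ : ℝ}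
    (hT : 0 ≤ T) (hγ : 0 ≤ γ) (hγ' : γ < 1 / 2) (hκ : 0 < κ) :
    ∃ M > 0, ∀ S, MeasurableSet S →
      (P[|B T ⁻¹' S]) {ω | ∃ s ∈ Ioc (0 : ℝ) 1, M * s ^ γ < |reversedBridge (B · ω) T s|} ≤
        ENNReal.ofReal κ := by
  obtain ⟨C, hC⟩ := hB.exists_forall_measure_exists_rpow_lt_abs_reversedBridge_le hT hγ hγ'
  obtain ⟨M, hMκ, hM⟩ := (((tendsto_const_nhds (x := C)).div_atTop tendsto_id).eventually_le_const
    hκ |>.and (eventually_gt_atTop 0)).exists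
  refine ⟨M, hM, fun S hS => ?_⟩
  have hg : ContinuousOn (fun s : ℝ => M * s ^ γ) (Ioc 0 1) := by
    fun_prop (disch := exact hγ)
  exact (hB.cond_exists_lt_abs_reversedBridge_le hT hg hS).trans
    ((hC M hM).trans (ENNReal.ofReal_le_ofReal hMκ))

end IsBrownianMotion

section Gaussian

variable {v : ℝ≥0} {y h : ℝ}

lemma gaussianReal_zero_Ioi_add_le (hv : v ≠ 0) (hh : 0 ≤ h) :
    gaussianReal 0 v (Ioi (y + h)) ≤
      ENNReal.ofReal (Real.exp (-(y * h / v))) * gaussianReal 0 v (Ioi y) := by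
  have hshift : gaussianReal 0 v (Ioi (y + h)) = gaussianReal (-h) v (Ioi y) := by
    rw [← zero_sub h, ← gaussianReal_map_sub_const,
      Measure.map_apply (by fun_prop) measurableSet_Ioi, preimage_sub_const_Ioi]
  have hexp : ∀ x, -(x - -h) ^ 2 / (2 * v) =
      -(y * h / v) + -(x - 0) ^ 2 / (2 * v) - (2 * ((x - y) * h) + h ^ 2) / (2 * v) := fun x => by
    field
  rw [hshift, gaussianReal_apply _ hv, gaussianReal_apply _ hv,
    ← lintegral_const_mul _ (measurable_gaussianPDF 0 v)]
  refine setLIntegral_mono ((measurable_gaussianPDF 0 v).const_mul _) fun x hx => ?_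
  rw [gaussianPDF, gaussianPDF, ← ENNReal.ofReal_mul (Real.exp_nonneg _)]
  refine ENNReal.ofReal_le_ofReal ?_
  rw [gaussianPDFReal, gaussianPDFReal, mul_left_comm, ← Real.exp_add, hexp]
  have hxy : 0 ≤ (x - y) * h := mul_nonneg (sub_nonneg.2 (le_of_lt hx)) hh
  gcongr
  exact sub_le_self _ (by positivity)

lemma gaussianPDFReal_zero_antitoneOn (v : ℝ≥0) : AntitoneOn (gaussianPDFReal 0 v) (Ici 0) := by
  intro x hx y _ hxy
  have hx0 : 0 ≤ x := hx
  rw [gaussianPDFReal, gaussianPDFReal, sub_zero, sub_zero]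
  gcongr

lemma gaussianReal_zero_Ioc_add_le (hv : v ≠ 0) (hy : 0 ≤ y) :
    gaussianReal 0 v (Ioc y (y + h)) ≤ ENNReal.ofReal (gaussianPDFReal 0 v y * h) := by
  calc gaussianReal 0 v (Ioc y (y + h)) = ∫⁻ x in Ioc y (y + h), gaussianPDF 0 v x :=
        gaussianReal_apply _ hv _
    _ ≤ ∫⁻ _ in Ioc y (y + h), ENNReal.ofReal (gaussianPDFReal 0 v y) :=
        setLIntegral_mono measurable_const fun x hx => ENNReal.ofReal_le_ofReal
          (gaussianPDFReal_zero_antitoneOn v hy (hy.trans hx.1.le) hx.1.le)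
    _ = ENNReal.ofReal (gaussianPDFReal 0 v y * h) := by
        rw [setLIntegral_const, Real.volume_Ioc, add_sub_cancel_left,
          ENNReal.ofReal_mul (gaussianPDFReal_nonneg _ _ _)]

lemma le_gaussianReal_zero_Ioi (hv : v ≠ 0) (hy : 0 ≤ y) (hh : 0 ≤ h) :
    ENNReal.ofReal (gaussianPDFReal 0 v (y + h) * h) ≤ gaussianReal 0 v (Ioi y) := by
  calc ENNReal.ofReal (gaussianPDFReal 0 v (y + h) * h)
      = ∫⁻ _ in Ioc y (y + h), ENNReal.ofReal (gaussianPDFReal 0 v (y + h)) := by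
        rw [setLIntegral_const, Real.volume_Ioc, add_sub_cancel_left,
          ENNReal.ofReal_mul (gaussianPDFReal_nonneg _ _ _)]
    _ ≤ ∫⁻ x in Ioc y (y + h), gaussianPDF 0 v x :=
        setLIntegral_mono (measurable_gaussianPDF 0 v) fun x hx => ENNReal.ofReal_le_ofReal
          (gaussianPDFReal_zero_antitoneOn v (hy.trans hx.1.le) (add_nonneg hy hh) hx.2)
    _ = gaussianReal 0 v (Ioc y (y + h)) := (gaussianReal_apply _ hv _).symm
    _ ≤ gaussianReal 0 v (Ioi y) := measure_mono Ioc_subset_Ioi_self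

lemma cond_gaussianReal_zero_Ioi_add_le (hv : v ≠ 0) (hh : 0 ≤ h) :
    ((gaussianReal 0 v)[|Ioi y]) (Ioi (y + h)) ≤ ENNReal.ofReal (Real.exp (-(y * h / v))) :=
  cond_apply_le_of_measure_inter_le measurableSet_Ioi
    ((measure_mono inter_subset_right).trans (gaussianReal_zero_Ioi_add_le hv hh))

lemma cond_gaussianReal_zero_Iic_add_le (hv : v ≠ 0) (hy : 0 ≤ y) {k : ℝ} (hk : 0 < k) :
    ((gaussianReal 0 v)[|Ioi y]) (Iic (y + h)) ≤
      ENNReal.ofReal (h / k * Real.exp ((2 * y * k + k ^ 2) / (2 * v))) := by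
  have hpdf : gaussianPDFReal 0 v y =
      Real.exp ((2 * y * k + k ^ 2) / (2 * v)) * gaussianPDFReal 0 v (y + k) := by
    rw [gaussianPDFReal, gaussianPDFReal, mul_left_comm, ← Real.exp_add]
    congr 2
    field
  refine cond_apply_le_of_measure_inter_le measurableSet_Ioi ?_
  calc gaussianReal 0 v (Ioi y ∩ Iic (y + h)) ≤ ENNReal.ofReal (gaussianPDFReal 0 v y * h) :=
        gaussianReal_zero_Ioc_add_le hv hy
    _ = ENNReal.ofReal (h / k * Real.exp ((2 * y * k + k ^ 2) / (2 * v))) *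
          ENNReal.ofReal (gaussianPDFReal 0 v (y + k) * k) := by
        rw [hpdf, ← ENNReal.ofReal_mul' (mul_nonneg (gaussianPDFReal_nonneg _ _ _) hk.le)]
        congr 1
        field_simp
    _ ≤ _ := by
        gcongr
        exact le_gaussianReal_zero_Ioi hv hy hk.le

lemma exists_cond_gaussianReal_zero_compl_Ioc_le (hv : v ≠ 0) {a κ : ℝ} (ha : 0 < a) (hκ : 0 < κ) :
    ∃ c > 0, ∃ C, ∀ ε ∈ Ioc (0 : ℝ) 1,
      ((gaussianReal 0 v)[|Ioi (a / ε)]) (Ioc (a / ε + c * ε) (a / ε + C * ε))ᶜ ≤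
        ENNReal.ofReal κ := by
  have hv0 : (0 : ℝ) < v := by positivity
  have hexp : Tendsto (fun C : ℝ => Real.exp (-(a * C / v))) atTop (𝓝 0) :=
    Real.tendsto_exp_neg_atTop_nhds_zero.comp
      ((tendsto_id.const_mul_atTop ha).atTop_div_const hv0)
  obtain ⟨C, hC, hC0⟩ :=
    ((hexp.eventually_le_const (half_pos hκ)).and (eventually_ge_atTop 0)).exists
  refine ⟨κ / 2 * Real.exp (-((2 * a + 1) / (2 * v))), by positivity, C, fun ε hε => ?_⟩
  have hε0 : ε ≠ 0 := hε.1.ne'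
  rw [compl_Ioc, ← add_halves κ, ENNReal.ofReal_add (half_pos hκ).le (half_pos hκ).le]
  refine (measure_union_le _ _).trans (add_le_add ?_ ?_)
  · refine (cond_gaussianReal_zero_Iic_add_le hv (div_nonneg ha.le hε.1.le) hε.1).trans
      (ENNReal.ofReal_le_ofReal ?_)
    rw [mul_div_cancel_right₀ _ hε0, add_halves, mul_assoc, ← Real.exp_add]
    refine mul_le_of_le_one_right (half_pos hκ).le (Real.exp_le_one_iff.2 ?_)
    rw [neg_add_nonpos_iff, show 2 * (a / ε) * ε = 2 * a by field]
    gcongr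
    exact pow_le_one₀ hε.1.le hε.2
  · refine (cond_gaussianReal_zero_Ioi_add_le hv (mul_nonneg hC0 hε.1.le)).trans
      (ENNReal.ofReal_le_ofReal ?_)
    rwa [show a / ε * (C * ε) = a * C by field]

lemma exists_eventually_cond_notMem_Icc_sq_le {Ω : Type*} [MeasurableSpace Ω] {P : Measure Ω}
    {Y : Ω → ℝ} (hv : v ≠ 0) (hY : HasLaw Y (gaussianReal 0 v) P) (hYm : Measurable Y) {x₀ κ : ℝ}
    (hx₀ : x₀ < 0) (hκ : 0 < κ) :
    ∃ c > 0, ∃ C, ∀ᶠ ε : ℝ in 𝓝[>] 0,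
      (P[|{ω | 0 < x₀ + ε * Y ω}]) {ω | x₀ + ε * Y ω ∉ Icc (c * ε ^ 2) (C * ε ^ 2)} ≤
        ENNReal.ofReal κ := by
  obtain ⟨c, hc, C, hcC⟩ := exists_cond_gaussianReal_zero_compl_Ioc_le hv (neg_pos.2 hx₀) hκ
  refine ⟨c, hc, C, ?_⟩
  filter_upwards [Ioc_mem_nhdsGT one_pos] with ε hε
  have hε0 : 0 < ε := hε.1
  have hpos : {ω | 0 < x₀ + ε * Y ω} = Y ⁻¹' Ioi (-x₀ / ε) := by
    ext ω
    simp only [mem_ofPred_eq, mem_preimage, mem_Ioi, div_lt_iff₀' hε0, neg_lt_iff_pos_add']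
  have hwindow : {ω | x₀ + ε * Y ω ∉ Icc (c * ε ^ 2) (C * ε ^ 2)} ⊆
      Y ⁻¹' (Ioc (-x₀ / ε + c * ε) (-x₀ / ε + C * ε))ᶜ := by
    refine fun ω hω hmem => hω ?_
    have hscale : ∀ b, b * ε ^ 2 = x₀ + ε * (-x₀ / ε + b * ε) := fun b => by field
    rw [hscale, hscale]
    exact ⟨by gcongr; exact hmem.1.le, by gcongr; exact hmem.2⟩
  rw [hpos]
  refine (measure_mono hwindow).trans ?_
  rw [cond_preimage_apply_of_hasLaw hY hYm measurableSet_Ioi measurableSet_Ioc.compl]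
  exact hcC ε hε

end Gaussian

section Crossing

variable {q x₀ c C M γ ε N u b m : ℝ}

lemma abs_sub_le_mul_add_of_crossing (hc : 0 < c) (hε : 0 ≤ ε) (hN : c * ε ^ 2 ≤ N)
    (hu0 : 0 ≤ u) (hu1 : u ≤ 1) (hum : u ≤ m) (hb : |b| ≤ m * √u)
    (hcross : q * u = x₀ * u ^ 2 + (1 - u ^ 2) * N + ε * b) :
    |q * u - N| ≤ m * ((|x₀| + 1) * u + (1 + 1 / c) * N) := by
  have hm0 : 0 ≤ m := hu0.trans hum
  have hN0 : 0 ≤ N := le_trans (by positivity) hN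
  have hsq : u ^ 2 ≤ m * u := by rw [sq]; gcongr
  have hnoise : ε * |b| ≤ m * (N / c + u) := by
    calc ε * |b| ≤ ε * (m * √u) := by gcongr
      _ = m * (ε * √u) := by ring
      _ ≤ m * (ε ^ 2 + u) := by
          gcongr
          nlinarith [sq_nonneg (ε - √u), Real.sq_sqrt hu0, sq_nonneg ε]
      _ ≤ m * (N / c + u) := by
          gcongr
          exact (le_div_iff₀' hc).2 hN
  calc |q * u - N| = |x₀ * u ^ 2 - u ^ 2 * N + ε * b| := by rw [hcross]; ring_nf
    _ ≤ |x₀ * u ^ 2| + |u ^ 2 * N| + |ε * b| :=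
        (abs_add_le _ _).trans (by gcongr; exact abs_sub _ _)
    _ = |x₀| * u ^ 2 + u ^ 2 * N + ε * |b| := by
        rw [abs_mul, abs_mul, abs_mul, abs_sq, abs_of_nonneg hN0, abs_of_nonneg hε]
    _ ≤ |x₀| * (m * u) + m * N + m * (N / c + u) := by
        gcongr
        exact hsq.trans (mul_le_of_le_one_right hm0 hu1)
    _ = m * ((|x₀| + 1) * u + (1 + 1 / c) * N) := by ring

lemma abs_sub_le_of_crossing (hq : 0 < q) (hc : 0 < c) (hε : 0 ≤ ε) (hN : c * ε ^ 2 ≤ N)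
    (hu0 : 0 ≤ u) (hu1 : u ≤ 1) (hum : u ≤ m) (hb : |b| ≤ m * √u)
    (hm : 2 * ((|x₀| + 1) / q + (1 + 1 / c)) * m ≤ 1)
    (hcross : q * u = x₀ * u ^ 2 + (1 - u ^ 2) * N + ε * b) :
    |q * u - N| ≤ 2 * ((|x₀| + 1) / q + (1 + 1 / c)) * m * N := by
  have hm0 : 0 ≤ m := hu0.trans hum
  have hu : u ≤ (N + |q * u - N|) / q := by
    rw [le_div_iff₀' hq]
    linarith [le_abs_self (q * u - N)]
  have hself : |q * u - N| ≤
      m * ((|x₀| + 1) / q + (1 + 1 / c)) * N + m * ((|x₀| + 1) / q) * |q * u - N| := by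
    calc |q * u - N| ≤ m * ((|x₀| + 1) * u + (1 + 1 / c) * N) :=
          abs_sub_le_mul_add_of_crossing hc hε hN hu0 hu1 hum hb hcross
      _ ≤ m * ((|x₀| + 1) * ((N + |q * u - N|) / q) + (1 + 1 / c) * N) := by gcongr
      _ = m * ((|x₀| + 1) / q + (1 + 1 / c)) * N + m * ((|x₀| + 1) / q) * |q * u - N| := by ring
  have hhalf : m * ((|x₀| + 1) / q) ≤ 1 / 2 := by
    have : 0 ≤ m * (1 + 1 / c) := by positivity
    linarith
  linarith [mul_le_mul_of_nonneg_right hhalf (abs_nonneg (q * u - N))]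

lemma le_mul_of_crossing (hq : 0 < q) (hx₀ : x₀ ≤ 0) (hM : 0 ≤ M) (hγ : 0 ≤ γ) (hε0 : 0 < ε)
    (hε1 : ε ≤ 1) (hN : N ∈ Icc 0 (C * ε ^ 2)) (hu0 : 0 ≤ u) (hu1 : u ≤ 1)
    (hb : |b| ≤ M * (u ^ 2) ^ γ) (hcross : q * u = x₀ * u ^ 2 + (1 - u ^ 2) * N + ε * b) :
    u ≤ (C + M) / q * ε := by
  have hC : 0 ≤ C := nonneg_of_mul_nonneg_left (hN.1.trans hN.2) (by positivity)
  have hbM : b ≤ M := (le_abs_self b).trans <| hb.trans <| mul_le_of_le_one_right hM <|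
    Real.rpow_le_one (sq_nonneg u) (pow_le_one₀ hu0 hu1) hγ
  rw [div_mul_eq_mul_div, le_div_iff₀' hq]
  calc q * u = x₀ * u ^ 2 + (1 - u ^ 2) * N + ε * b := hcross
    _ ≤ 0 + N + ε * M := by
        gcongr
        · exact mul_nonpos_of_nonpos_of_nonneg hx₀ (sq_nonneg u)
        · exact mul_le_of_le_one_left hN.1 (sub_le_self 1 (sq_nonneg u))
    _ ≤ 0 + C * ε + ε * M := by
        gcongr
        exact hN.2.trans (by gcongr; exact pow_le_of_le_one hε0.le hε1 two_ne_zero)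
    _ = (C + M) * ε := by ring

lemma mul_sq_rpow_le_mul_sqrt {r : ℝ} (hM : 0 ≤ M) (hγ : 1 / 4 ≤ γ) (hu : 0 < u) (hur : u ≤ r) :
    M * (u ^ 2) ^ γ ≤ M * r ^ (2 * γ - 1 / 2) * √u := by
  have hsplit : (u ^ 2) ^ γ = u ^ (2 * γ - 1 / 2) * √u := by
    rw [Real.sqrt_eq_rpow, ← Real.rpow_add hu, sub_add_cancel, ← Real.rpow_natCast_mul hu.le]
    norm_num
  rw [hsplit, ← mul_assoc]
  gcongr
  linarith

lemma eventually_abs_crossing_ratio_sub_one_lt {ρ : ℝ} (hq : 0 < q) (hx₀ : x₀ ≤ 0) (hc : 0 < c)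
    (hM : 0 ≤ M) (hγ : 1 / 4 < γ) (hρ : 0 < ρ) :
    ∀ᶠ ε in 𝓝[>] 0, ∀ N ∈ Icc (c * ε ^ 2) (C * ε ^ 2), ∀ u ∈ Ioc (0 : ℝ) 1, ∀ b,
      |b| ≤ M * (u ^ 2) ^ γ → q * u = x₀ * u ^ 2 + (1 - u ^ 2) * N + ε * b →
        |q * u / N - 1| < ρ := by
  set D : ℝ := (C + M) / q
  set K : ℝ := 2 * ((|x₀| + 1) / q + (1 + 1 / c))
  let m : ℝ → ℝ := fun ε => D * ε + M * (D * ε) ^ (2 * γ - 1 / 2)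
  have hexp : 0 < 2 * γ - 1 / 2 := by linarith
  have hm : Tendsto (fun ε => K * m ε) (𝓝[>] 0) (𝓝 0) := by
    have hcont : Continuous fun ε => K * m ε := by fun_prop (disch := exact hexp.le)
    have h0 : K * m 0 = 0 := by
      simp only [m, mul_zero, Real.zero_rpow hexp.ne', add_zero]
    exact (h0 ▸ hcont.tendsto 0).mono_left nhdsWithin_le_nhds
  filter_upwards [Ioc_mem_nhdsGT one_pos, hm.eventually_lt_const hρ, hm.eventually_le_const one_pos]
    with ε hε hmρ hm1 N hN u hu b hb hcross
  have hN0 : 0 < N := (mul_pos hc (pow_pos hε.1 2)).trans_le hN.1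
  have huD : u ≤ D * ε := le_mul_of_crossing hq hx₀ hM (by linarith) hε.1 hε.2 ⟨hN0.le, hN.2⟩
    hu.1.le hu.2 hb hcross
  have hDε : 0 ≤ D * ε := hu.1.le.trans huD
  have hclose : |q * u - N| ≤ K * m ε * N := by
    refine abs_sub_le_of_crossing hq hc hε.1.le hN.1 hu.1.le hu.2 ?_ ?_ hm1 hcross
    · exact huD.trans (le_add_of_nonneg_right (by positivity))
    · refine (hb.trans (mul_sq_rpow_le_mul_sqrt hM hγ.le hu.1 huD)).trans ?_
      gcongr
      exact le_add_of_nonneg_left hDε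
  rw [div_sub_one hN0.ne', abs_div, abs_of_pos hN0, div_lt_iff₀ hN0]
  exact hclose.trans_lt (by gcongr)

end Crossing

lemma sInf_mem_setOf_eq_of_tendsto_atTop {g : ℝ → ℝ} {a q : ℝ} (hg : ContinuousOn g (Ici a))
    (hga : g a ≤ q) (htop : Tendsto g atTop atTop) :
    sInf {t | a ≤ t ∧ g t = q} ∈ {t | a ≤ t ∧ g t = q} := by
  obtain ⟨t, hat, hqt⟩ := ((eventually_ge_atTop a).and (htop.eventually_ge_atTop q)).exists
  obtain ⟨s, hs, hsq⟩ := intermediate_value_Icc hat (hg.mono Icc_subset_Ici_self) ⟨hga, hqt⟩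
  exact (hg.preimage_isClosed_of_isClosed isClosed_Ici isClosed_singleton).csInf_mem
    ⟨s, hs.1, hsq⟩ ⟨a, fun _ ht => ht.1⟩

/-- The time change turning Brownian motion into the martingale part `∫₀ᵗ e^{-λs} dW(s)` of the
rescaled Ornstein-Uhlenbeck process; it increases from `0` to `1 / (2λ)`. -/
noncomputable def ouClock (lam t : ℝ) : ℝ :=
  (1 - Real.exp (-(2 * lam * t))) / (2 * lam)

/-- The path of the repelling Ornstein-Uhlenbeck process `dX = λ X dt + ε dW`, `X 0 = x₀`, driven by
the time-changed path `f`. -/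
noncomputable def ouPath (lam x₀ ε : ℝ) (f : ℝ → ℝ) (t : ℝ) : ℝ :=
  Real.exp (lam * t) * (x₀ + ε * f (ouClock lam t))

/-- The variable `Q_ε` for the path `f`: `ln` of the ratio of the rescaled process at time `∞` to
the rescaled process when the path `ouPath lam x₀ ε f` first reaches `q`, divided by `λ`. -/
noncomputable def exitLogRatio (lam x₀ q ε : ℝ) (f : ℝ → ℝ) : ℝ :=
  1 / lam * Real.log ((x₀ + ε * f (1 / (2 * lam))) /
    (x₀ + ε * f (ouClock lam (sInf {t | 0 ≤ t ∧ ouPath lam x₀ ε f t = q}))))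

section OrnsteinUhlenbeck

variable {lam x₀ ε q t : ℝ} {f : ℝ → ℝ}

lemma ouClock_eq (lam t : ℝ) : ouClock lam t = 1 / (2 * lam) * (1 - Real.exp (-(lam * t)) ^ 2) := by
  rw [ouClock, ← Real.exp_nat_mul]
  ring_nf

lemma ouClock_nonneg (hlam : 0 ≤ lam) (ht : 0 ≤ t) : 0 ≤ ouClock lam t := by
  have hexp : Real.exp (-(2 * lam * t)) ≤ 1 :=
    Real.exp_le_one_iff.2 (neg_nonpos.2 (by positivity))
  exact div_nonneg (sub_nonneg.2 hexp) (by positivity)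

lemma tendsto_ouClock_atTop (hlam : 0 < lam) :
    Tendsto (ouClock lam) atTop (𝓝[Ici 0] (1 / (2 * lam))) := by
  refine tendsto_nhdsWithin_iff.2
    ⟨?_, (eventually_ge_atTop 0).mono fun t ht => ouClock_nonneg hlam.le ht⟩
  have hexp : Tendsto (fun t : ℝ => Real.exp (-(2 * lam * t))) atTop (𝓝 0) :=
    Real.tendsto_exp_neg_atTop_nhds_zero.comp (tendsto_id.const_mul_atTop (by positivity))
  have hclock := (hexp.const_sub 1).div_const (2 * lam)
  rwa [sub_zero] at hclock

lemma continuousOn_ouPath (hlam : 0 ≤ lam) (hf : ContinuousOn f (Ici 0)) :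
    ContinuousOn (ouPath lam x₀ ε f) (Ici 0) := by
  have hclock : ContinuousOn (ouClock lam) (Ici 0) := by unfold ouClock; fun_prop
  exact ContinuousOn.mul (by fun_prop) (continuousOn_const.add (continuousOn_const.mul
    (hf.comp hclock fun t ht => ouClock_nonneg hlam ht)))

lemma tendsto_ouPath_atTop (hlam : 0 < lam) (hf : ContinuousOn f (Ici 0))
    (hN : 0 < x₀ + ε * f (1 / (2 * lam))) : Tendsto (ouPath lam x₀ ε f) atTop atTop := by
  have hT : 1 / (2 * lam) ∈ Ici (0 : ℝ) := mem_Ici.2 (by positivity)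
  exact (Real.tendsto_exp_atTop.comp (tendsto_id.const_mul_atTop hlam)).atTop_mul_pos hN
    ((((hf _ hT).tendsto.comp (tendsto_ouClock_atTop hlam)).const_mul ε).const_add x₀)

lemma sInf_hitting_ouPath_mem (hlam : 0 < lam) (hf : ContinuousOn f (Ici 0)) (hf0 : f 0 = 0)
    (hx₀ : x₀ ≤ q) (hN : 0 < x₀ + ε * f (1 / (2 * lam))) :
    sInf {t | 0 ≤ t ∧ ouPath lam x₀ ε f t = q} ∈ {t | 0 ≤ t ∧ ouPath lam x₀ ε f t = q} := by
  refine sInf_mem_setOf_eq_of_tendsto_atTop (continuousOn_ouPath hlam.le hf) ?_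
    (tendsto_ouPath_atTop hlam hf hN)
  simpa [ouPath, ouClock, hf0] using hx₀

lemma mul_exp_neg_eq_of_ouPath_eq (h : ouPath lam x₀ ε f t = q) :
    q * Real.exp (-(lam * t)) = x₀ + ε * f (ouClock lam t) := by
  rw [← h, ouPath, mul_right_comm, ← Real.exp_add, add_neg_cancel, Real.exp_zero, one_mul]

lemma crossing_of_ouPath_eq (h : ouPath lam x₀ ε f t = q) :
    q * Real.exp (-(lam * t)) = x₀ * Real.exp (-(lam * t)) ^ 2 +
      (1 - Real.exp (-(lam * t)) ^ 2) * (x₀ + ε * f (1 / (2 * lam))) +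
      ε * reversedBridge f (1 / (2 * lam)) (Real.exp (-(lam * t)) ^ 2) := by
  rw [mul_exp_neg_eq_of_ouPath_eq h, ouClock_eq, reversedBridge]
  ring

lemma eventually_abs_exitLogRatio_lt {c C M γ δ : ℝ} (hlam : 0 < lam) (hx₀ : x₀ ≤ 0)
    (hq : 0 < q) (hc : 0 < c) (hM : 0 ≤ M) (hγ : 1 / 4 < γ) (hδ : 0 < δ) :
    ∀ᶠ ε in 𝓝[>] 0, ∀ f : ℝ → ℝ, f 0 = 0 → ContinuousOn f (Ici 0) →
      x₀ + ε * f (1 / (2 * lam)) ∈ Icc (c * ε ^ 2) (C * ε ^ 2) →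
      (∀ s ∈ Ioc (0 : ℝ) 1, |reversedBridge f (1 / (2 * lam)) s| ≤ M * s ^ γ) →
      |exitLogRatio lam x₀ q ε f| < δ := by
  obtain ⟨ρ, hρ, hlog⟩ := Metric.continuousAt_iff.1 (Real.continuousAt_log one_ne_zero) (lam * δ)
    (by positivity)
  filter_upwards [eventually_abs_crossing_ratio_sub_one_lt hq hx₀ hc hM hγ hρ,
    self_mem_nhdsWithin] with ε hcross hε f hf0 hf hN hbridge
  have hN0 : 0 < x₀ + ε * f (1 / (2 * lam)) := (mul_pos hc (pow_pos hε 2)).trans_le hN.1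
  obtain ⟨hθ0, hθ⟩ := sInf_hitting_ouPath_mem hlam hf hf0 (hx₀.trans hq.le) hN0
  set θ := sInf {t | 0 ≤ t ∧ ouPath lam x₀ ε f t = q}
  set u := Real.exp (-(lam * θ))
  have hu0 : 0 < u := Real.exp_pos _
  have hu1 : u ≤ 1 := Real.exp_le_one_iff.2 (neg_nonpos.2 (by positivity))
  have hratio : |q * u / (x₀ + ε * f (1 / (2 * lam))) - 1| < ρ :=
    hcross _ hN u ⟨hu0, hu1⟩ _ (hbridge _ ⟨pow_pos hu0 2, pow_le_one₀ hu0.le hu1⟩)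
      (crossing_of_ouPath_eq hθ)
  have hlogδ := hlog hratio
  rw [Real.dist_eq, Real.log_one, sub_zero] at hlogδ
  rwa [exitLogRatio, ← mul_exp_neg_eq_of_ouPath_eq hθ, ← inv_div (q * u), Real.log_inv, mul_neg,
    abs_neg, abs_mul, abs_of_pos (one_div_pos.2 hlam), one_div_mul_eq_div, div_lt_iff₀' hlam]

end OrnsteinUhlenbeck

lemma IsBrownianMotion.eventually_cond_le_abs_exitLogRatio_le {Ω : Type*} [MeasurableSpace Ω]
    {P : Measure Ω} {B : ℝ → Ω → ℝ} (hB : IsBrownianMotion P B) {lam x₀ q δ κ : ℝ} (hlam : 0 < lam)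
    (hx₀ : x₀ < 0) (hq : 0 < q) (hδ : 0 < δ) (hκ : 0 < κ) :
    ∀ᶠ ε in 𝓝[>] 0, (P[|{ω | 0 < x₀ + ε * B (1 / (2 * lam)) ω}])
      {ω | δ ≤ |exitLogRatio lam x₀ q ε (B · ω)|} ≤ ENNReal.ofReal κ := by
  set T : ℝ := 1 / (2 * lam)
  have hT : 0 < T := by positivity
  obtain ⟨c, hc, C, hend⟩ := exists_eventually_cond_notMem_Icc_sq_le (Real.toNNReal_pos.2 hT).ne'
    (hB.hasLaw_eval hT.le) (hB.measurable T) hx₀ (half_pos hκ)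
  obtain ⟨M, hM, hbridge⟩ := hB.exists_cond_exists_rpow_lt_abs_reversedBridge_le (γ := 3 / 8) hT.le
    (by norm_num) (by norm_num) (half_pos hκ)
  filter_upwards [hend, eventually_abs_exitLogRatio_lt (C := C) (γ := 3 / 8) hlam hx₀.le hq hc
    hM.le (by norm_num) hδ] with ε hend hpath
  calc (P[|{ω | 0 < x₀ + ε * B T ω}]) {ω | δ ≤ |exitLogRatio lam x₀ q ε (B · ω)|}
      ≤ (P[|{ω | 0 < x₀ + ε * B T ω}]) ({ω | x₀ + ε * B T ω ∉ Icc (c * ε ^ 2) (C * ε ^ 2)} ∪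
          {ω | ∃ s ∈ Ioc (0 : ℝ) 1, M * s ^ (3 / 8 : ℝ) < |reversedBridge (B · ω) T s|}) := by
        refine measure_mono_ae (cond_absolutelyContinuous.ae_le ?_)
        filter_upwards [hB.ae_zero_and_continuousOn] with ω ⟨hω0, hω⟩ hωδ
        by_contra hgood
        obtain ⟨hN, hbr⟩ := not_or.1 hgood
        exact (hpath (B · ω) hω0 hω (not_not.1 hN)
          fun s hs => not_lt.1 fun hlt => hbr ⟨s, hs, hlt⟩).not_ge hωδ
    _ ≤ ENNReal.ofReal (κ / 2) + ENNReal.ofReal (κ / 2) :=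
        (measure_union_le _ _).trans (add_le_add hend (hbridge {y | 0 < x₀ + ε * y}
          (measurableSet_lt (by fun_prop) (by fun_prop))))
    _ = ENNReal.ofReal κ := by
        rw [← ENNReal.ofReal_add (half_pos hκ).le (half_pos hκ).le, add_halves]

theorem Q_eps_tendsto_zero_in_conditional_probability_general
    {Ω : Type*} [MeasurableSpace Ω] {P : Measure Ω} {B : ℝ → Ω → ℝ} (hB : IsBrownianMotion P B)
    {lam x₀ qp : ℝ} (hlam : 0 < lam) (hx₀ : x₀ < 0) (hqp : 0 < qp)
    {X : ℝ → ℝ → Ω → ℝ}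
    (hX : ∀ ε t ω, X ε t ω
      = Real.exp (lam * t) * (x₀ + ε * B ((1 - Real.exp (-(2 * lam * t))) / (2 * lam)) ω))
    {θ : ℝ → Ω → ℝ} (hθ : ∀ ε ω, θ ε ω = sInf {t | 0 ≤ t ∧ X ε t ω = qp})
    {F : ℝ → Set Ω} (hF : ∀ ε, F ε = {ω | 0 < x₀ + ε * B (1 / (2 * lam)) ω})
    {Q : ℝ → Ω → ℝ}
    (hQ : ∀ ε ω, Q ε ω = (1 / lam) * Real.log ((x₀ + ε * B (1 / (2 * lam)) ω)
      / (x₀ + ε * B ((1 - Real.exp (-(2 * lam * θ ε ω))) / (2 * lam)) ω)))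
    {δ : ℝ} (hδ : 0 < δ) :
    Tendsto (fun ε : ℝ => ((P[|F ε]) {ω | δ ≤ |Q ε ω|}).toReal) (𝓝[>] 0) (𝓝 0) := by
  have hQ_eq : ∀ ε ω, Q ε ω = exitLogRatio lam x₀ qp ε (B · ω) := fun ε ω => by
    rw [hQ, hθ]
    simp only [hX]
    rfl
  simp only [hF, hQ_eq]
  refine (ENNReal.tendsto_toReal ENNReal.zero_ne_top).comp
    (ENNReal.tendsto_nhds_zero.2 fun κ' hκ' => ?_)
  obtain ⟨κ, -, hκ0, hκκ'⟩ := ENNReal.lt_iff_exists_real_btwn.1 hκ'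
  filter_upwards [hB.eventually_cond_le_abs_exitLogRatio_le hlam hx₀ hqp hδ
    (ENNReal.ofReal_pos.1 hκ0)] with ε hε
  exact hε.trans hκκ'.le

/-- Lemma 8: with `F_ε = {x₀ + ε B(1/(2λ)) > 0}`, `θ_ε = inf{t ≥ 0 : X_ε(t) = q₊}` and
`Q_ε = (1/λ) ln((x₀ + ε B(1/(2λ)))/(x₀ + ε B((1 - e^{-2λθ_ε})/(2λ))))`, the conditional law
`Law[Q_ε | F_ε]` converges weakly to `δ₀` as `ε → 0⁺`; equivalently, `Q_ε → 0` in
probability with respect to `P(·|F_ε)`. -/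
theorem Q_eps_tendsto_zero_in_conditional_probability
    {Ω : Type*} [MeasurableSpace Ω] (P : Measure Ω) [IsProbabilityMeasure P]
    (hPc : P.IsComplete)
    (B : ℝ → Ω → ℝ) (hB : IsBrownianMotion P B)
    (lam qm x₀ qp : ℝ) (hlam : 0 < lam) (hqm : qm < x₀) (hx₀ : x₀ < 0) (hqp : 0 < qp)
    (X : ℝ → ℝ → Ω → ℝ)
    (hX : ∀ ε t ω, X ε t ω
      = Real.exp (lam * t) * (x₀ + ε * B ((1 - Real.exp (-(2 * lam * t))) / (2 * lam)) ω))
    (θ : ℝ → Ω → ℝ)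
    (hθ : ∀ ε ω, θ ε ω = sInf {t | 0 ≤ t ∧ X ε t ω = qp})
    (F : ℝ → Set Ω)
    (hF : ∀ ε, F ε = {ω | 0 < x₀ + ε * B (1 / (2 * lam)) ω})
    (Q : ℝ → Ω → ℝ)
    (hQ : ∀ ε ω, Q ε ω = (1 / lam) * Real.log ((x₀ + ε * B (1 / (2 * lam)) ω)
      / (x₀ + ε * B ((1 - Real.exp (-(2 * lam * θ ε ω))) / (2 * lam)) ω))) :
    ∀ δ : ℝ, 0 < δ →
      Tendsto (fun ε : ℝ => ((P[|F ε]) {ω | δ ≤ |Q ε ω|}).toReal) (𝓝[>] 0) (𝓝 0) :=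
  fun _ hδ => Q_eps_tendsto_zero_in_conditional_probability_general hB hlam hx₀ hqp hX hθ hF hQ hδ
end

section
/- Define J_ε = ε·e^{−μτ_ε}·B²((e^{2μτ_ε} − 1)/(2μ)) (the noise contribution to X²_ε(τ_ε)). Then, as ε → 0⁺, the conditional law Law[J_ε/ε | C_ε] converges weakly to the law of N/√(2μ), where N is a standard Gaussian random variable. -/
/-!
The exit time `τ` is a function of `B¹`, hence independent of `B²`, so conditionally on `τ` the
variable `J / ε` is exactly Gaussian with variance `(1 - exp (-2 μ τ)) / (2 μ)`. It therefore
suffices that `τ → ∞` in probability conditionally on `C`.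

Put `S = 1 / (2 λ)`, `y = -x₁ / ε` and `G = N(0, S)`. Let a Brownian path cross a continuous curve
before time `S`. If from every point of the curve the path ends below a level `a` with probability
at most `p`, then crossing and ending below `a` has probability at most `p` times that of crossing.

* For the constant curve this is the reflection inequality. An exit through `q₊` by time `T` forces
  the path above `y + κ / ε` for some `κ > 0`, so `P(C, τ ≤ T) ≤ 2 G[y + κ / ε, ∞)`.
* For the curve `-y - d √(1 - s / S)`, which `X¹` sees as a constant level above `q₋`, it bounds the
  loss from paths that end above `y` without exiting through `q₊`: for some `δ > 0`,
  `G[y, ∞) ≤ P(C) + G[y + δ / ε, ∞)`.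

Shifting the tail of `G` by `h` costs a factor `exp (-h² / (2 S))`, so both correction terms are
negligible against `G[y, ∞)`, and `P(τ ≤ T | C) → 0`.
-/

open MeasureTheory ProbabilityTheory Filter Topology Set

open scoped NNReal ENNReal BoundedContinuousFunction

section Gaussian

variable {v : ℝ≥0}

theorem gaussianReal_zero_map_neg (v : ℝ≥0) :
    (gaussianReal 0 v).map (fun x => -x) = gaussianReal 0 v := by
  simpa using gaussianReal_map_neg (μ := 0) (v := v)

theorem gaussianReal_zero_Iio_neg (v : ℝ≥0) (x : ℝ) :
    gaussianReal 0 v (Iio (-x)) = gaussianReal 0 v (Ioi x) := by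
  rw [← gaussianReal_zero_map_neg, Measure.map_apply measurable_neg measurableSet_Iio,
    gaussianReal_zero_map_neg]
  simp

theorem gaussianReal_Iio_zero_le_half (v : ℝ≥0) : gaussianReal 0 v (Iio 0) ≤ 2⁻¹ := by
  have hsum : gaussianReal 0 v (Iio 0) + gaussianReal 0 v (Iio 0) ≤ 1 := by
    have hsymm : gaussianReal 0 v (Iio 0) = gaussianReal 0 v (Ioi 0) := by
      simpa using gaussianReal_zero_Iio_neg v 0
    nth_rewrite 2 [hsymm]
    rw [← measure_union ((Iio_disjoint_Ici le_rfl).mono_right Ioi_subset_Ici_self)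
      measurableSet_Ioi]
    exact prob_le_one
  rwa [← two_mul, mul_comm, ← ENNReal.le_div_iff_mul_le (by simp) (by simp), one_div] at hsum

theorem gaussianReal_sq_mul_Iio_mul_le (v r : ℝ≥0) (x : ℝ) :
    gaussianReal 0 (r ^ 2 * v) (Iio (r * x)) ≤ gaussianReal 0 v (Iio x) := by
  have hmap : gaussianReal 0 (r ^ 2 * v) = (gaussianReal 0 v).map (fun z => (r : ℝ) * z) := by
    rw [gaussianReal_map_const_mul, mul_zero]
    rfl
  rw [hmap, Measure.map_apply (measurable_const_mul _) measurableSet_Iio]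
  exact measure_mono fun z hz => lt_of_mul_lt_mul_left hz r.coe_nonneg

/-- The factor `exp (-h² / (2 * v))` by which the upper tail of a centered Gaussian of variance `v`
decays at least when it is shifted to the right by `h`. -/
noncomputable def tailDecay (v : ℝ≥0) (h : ℝ) : ℝ := Real.exp (-(h ^ 2 / (2 * v)))

theorem tailDecay_nonneg {h : ℝ} : 0 ≤ tailDecay v h := Real.exp_nonneg _

theorem tailDecay_lt_one (hv : v ≠ 0) {h : ℝ} (hh : 0 < h) : tailDecay v h < 1 :=
  Real.exp_lt_one_iff.2 (neg_lt_zero.2 (by positivity))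

theorem tendsto_tailDecay_div_nhdsGT (hv : v ≠ 0) {κ : ℝ} (hκ : 0 < κ) :
    Tendsto (fun ε => tailDecay v (κ / ε)) (𝓝[>] 0) (𝓝 0) := by
  have hdiv : Tendsto (fun ε => κ / ε) (𝓝[>] 0) atTop :=
    tendsto_inv_nhdsGT_zero.const_mul_atTop hκ
  exact Real.tendsto_exp_neg_atTop_nhds_zero.comp
    (((tendsto_pow_atTop two_ne_zero).comp hdiv).atTop_div_const (by positivity))

theorem gaussianReal_Ici_add_le (hv : v ≠ 0) {y h : ℝ} (hy : 0 ≤ y) (hh : 0 ≤ h) :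
    gaussianReal 0 v (Ici (y + h)) ≤
      ENNReal.ofReal (tailDecay v h) * gaussianReal 0 v (Ici y) := by
  have hpdf (x : ℝ) (hx : y ≤ x) : gaussianPDF 0 v (x + h) ≤
      ENNReal.ofReal (tailDecay v h) * gaussianPDF 0 v x := by
    rw [gaussianPDF, gaussianPDF, ← ENNReal.ofReal_mul tailDecay_nonneg]
    refine ENNReal.ofReal_le_ofReal ?_
    rw [gaussianPDFReal, gaussianPDFReal, tailDecay, mul_left_comm, ← Real.exp_add]
    gcongr
    rw [← neg_div, ← add_div]
    gcongr
    nlinarith [mul_nonneg (hy.trans hx) hh]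
  calc gaussianReal 0 v (Ici (y + h))
      = ∫⁻ x, (Ici (y + h)).indicator (gaussianPDF 0 v) (x + h) := by
        rw [gaussianReal_apply 0 hv, lintegral_add_right_eq_self,
          lintegral_indicator measurableSet_Ici]
    _ = ∫⁻ x in Ici y, gaussianPDF 0 v (x + h) := by
        rw [← lintegral_indicator measurableSet_Ici]
        simp [indicator]
    _ ≤ ∫⁻ x in Ici y, ENNReal.ofReal (tailDecay v h) * gaussianPDF 0 v x :=
        setLIntegral_mono (by fun_prop) hpdf
    _ = ENNReal.ofReal (tailDecay v h) * gaussianReal 0 v (Ici y) := by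
        rw [lintegral_const_mul _ (by fun_prop), gaussianReal_apply 0 hv]

theorem gaussianReal_Ici_pos (hv : v ≠ 0) (x : ℝ) : 0 < gaussianReal 0 v (Ici x) :=
  pos_iff_ne_zero.2 fun h => by simpa using gaussianReal_absolutelyContinuous' 0 hv h

end Gaussian

section FirstPassage

variable {Ω : Type*} [MeasurableSpace Ω] {P : Measure Ω}

theorem measure_iUnion_inter_le_mul {E : ℕ → Set Ω} (hE : ∀ k, MeasurableSet (E k)) {F : Set Ω}
    {p : ℝ≥0∞} (hp : ∀ k, P (disjointed E k ∩ F) ≤ p * P (disjointed E k)) :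
    P ((⋃ k, E k) ∩ F) ≤ p * P (⋃ k, E k) := by
  rw [← iUnion_disjointed, iUnion_inter]
  calc P (⋃ k, disjointed E k ∩ F) ≤ ∑' k, P (disjointed E k ∩ F) := measure_iUnion_le _
    _ ≤ ∑' k, p * P (disjointed E k) := ENNReal.tsum_le_tsum hp
    _ = p * P (⋃ k, disjointed E k) := by
      rw [ENNReal.tsum_mul_left, measure_iUnion (disjoint_disjointed E) (.disjointed hE)]

variable {B : ℝ≥0 → Ω → ℝ} {S : ℝ≥0} {a : ℝ} {p : ℝ≥0∞}

theorem measure_exists_grid_lt_inter_lt_le (hB : IsPreBrownianReal B P)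
    (hm : ∀ t, Measurable (B t)) {t : ℕ → ℝ≥0} (ht : Monotone t) (hS : ∀ k, t k ≤ S) {β : ℕ → ℝ}
    (hp : ∀ k, P {ω | B S ω - B (t k) ω < a - β k} ≤ p) :
    P ((⋃ k, {ω | β k < B (t k) ω}) ∩ {ω | B S ω < a}) ≤
      p * P (⋃ k, {ω | β k < B (t k) ω}) := by
  refine measure_iUnion_inter_le_mul (fun k => measurableSet_lt measurable_const (hm _))
    fun k => ?_
  set D := disjointed (fun k => {ω | β k < B (t k) ω}) k with hD
  have hD_past : MeasurableSet[.comap (fun ω (s : Iic (t k)) => B s ω) inferInstance] D := by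
    have hpast (j : ℕ) (hj : j ≤ k) :
        MeasurableSet[.comap (fun ω (s : Iic (t k)) => B s ω) inferInstance]
          {ω | β j < B (t j) ω} :=
      ⟨{x | β j < x ⟨t j, ht hj⟩}, measurableSet_lt measurable_const (measurable_pi_apply _), rfl⟩
    rw [hD, disjointed_eq_inter_compl]
    exact (hpast k le_rfl).inter (.iInter fun j => .iInter fun hj => (hpast j hj.le).compl)
  have hincr : MeasurableSet[.comap (fun ω s => B (t k + s) ω - B (t k) ω) inferInstance]
      {ω | B S ω - B (t k) ω < a - β k} :=
    ⟨{x | x (S - t k) < a - β k}, measurableSet_lt (measurable_pi_apply _) measurable_const, by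
      simp only [preimage_ofPred_eq, add_tsub_cancel_of_le (hS k)]⟩
  calc P (D ∩ {ω | B S ω < a}) ≤ P (D ∩ {ω | B S ω - B (t k) ω < a - β k}) :=
        measure_mono fun ω ⟨hω, hlt⟩ => ⟨hω, show B S ω - B (t k) ω < a - β k from
          sub_lt_sub hlt (disjointed_subset (fun k => {ω | β k < B (t k) ω}) k hω)⟩
    _ = P {ω | B S ω - B (t k) ω < a - β k} * P D := by
      rw [inter_comm]
      exact Indep_iff _ _ P |>.1 (hB.indepFun_shift (t k)) _ _ hincr hD_past
    _ ≤ p * P D := by gcongr; exact hp k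

theorem tendsto_floor_mul_two_pow_div_two_pow (s : ℝ≥0) :
    Tendsto (fun n : ℕ => (⌊(s : ℝ) * 2 ^ n⌋₊ : ℝ≥0) / 2 ^ n) atTop (𝓝 s) := by
  rw [← NNReal.tendsto_coe]
  push_cast
  exact (tendsto_nat_floor_mul_div_atTop s.coe_nonneg).comp
    (tendsto_pow_atTop_atTop_of_one_lt one_lt_two)

theorem measure_exists_lt_inter_lt_le (hB : IsBrownianReal B P) (hm : ∀ t, Measurable (B t))
    {β : ℝ≥0 → ℝ} (hβ : Continuous β)
    (hp : ∀ s ≤ S, P {ω | B S ω - B s ω < a - β s} ≤ p) :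
    P ({ω | ∃ s ≤ S, β s < B s ω} ∩ {ω | B S ω < a}) ≤ p * P {ω | ∃ s ≤ S, β s < B s ω} := by
  let t : ℕ → ℕ → ℝ≥0 := fun n k => min (k / 2 ^ n) S
  let U : ℕ → Set Ω := fun n => ⋃ k, {ω | β (t n k) < B (t n k) ω}
  have hU_mono : Monotone U := by
    refine monotone_nat_of_le_succ fun n => iUnion_subset fun k => ?_
    have hrefine : t n k = t (n + 1) (2 * k) := by
      simp only [t, pow_succ']
      push_cast
      rw [mul_div_mul_left _ _ two_ne_zero]
    rw [hrefine]
    exact subset_iUnion (fun k => {ω | β (t (n + 1) k) < B (t (n + 1) k) ω}) (2 * k)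
  have hU_sub (n : ℕ) : U n ⊆ {ω | ∃ s ≤ S, β s < B s ω} :=
    iUnion_subset fun k _ hω => ⟨t n k, min_le_right _ _, hω⟩
  have hU_exhausts : ({ω | ∃ s ≤ S, β s < B s ω} : Set Ω) ≤ᵐ[P] ⋃ n, U n := by
    filter_upwards [hB.cont] with ω hcont ⟨s, hs, hlt⟩
    have ht : Tendsto (fun n => t n ⌊(s : ℝ) * 2 ^ n⌋₊) atTop (𝓝 s) := by
      simpa only [t, min_eq_left hs] using
        (tendsto_floor_mul_two_pow_div_two_pow s).min
          (tendsto_const_nhds (x := S))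
    obtain ⟨n, hn⟩ := (ht.eventually ((isOpen_lt hβ hcont).mem_nhds hlt)).exists
    exact mem_iUnion.2 ⟨n, mem_iUnion.2 ⟨_, hn⟩⟩
  calc P ({ω | ∃ s ≤ S, β s < B s ω} ∩ {ω | B S ω < a})
      ≤ P (⋃ n, U n ∩ {ω | B S ω < a}) := by
        rw [← iUnion_inter]
        exact measure_mono_ae (hU_exhausts.inter .rfl)
    _ = ⨆ n, P (U n ∩ {ω | B S ω < a}) :=
        (hU_mono.inter monotone_const).measure_iUnion
    _ ≤ ⨆ n, p * P (U n) := iSup_mono fun n =>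
        measure_exists_grid_lt_inter_lt_le hB.toIsPreBrownianReal hm
          (fun i j hij => show min _ _ ≤ min _ _ by gcongr) (fun k => min_le_right _ _)
          fun k => hp _ (min_le_right _ _)
    _ ≤ p * P {ω | ∃ s ≤ S, β s < B s ω} := iSup_le fun n => by gcongr; exact hU_sub n

-- By Brownian scaling, the probability that `B S - B s` is below `-d * √(1 - s / S)` does not
-- depend on `s < S`, so a single constant serves for all first passage times.
theorem measure_exists_sqrt_barrier_lt_inter_lt_le (hB : IsBrownianReal B P)
    (hm : ∀ t, Measurable (B t)) (d : ℝ) :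
    P ({ω | ∃ s ≤ S, a + NNReal.sqrt (1 - s / S) * d < B s ω} ∩ {ω | B S ω < a}) ≤
      gaussianReal 0 S (Iio (-d)) * P {ω | ∃ s ≤ S, a + NNReal.sqrt (1 - s / S) * d < B s ω} := by
  refine measure_exists_lt_inter_lt_le hB hm (by fun_prop) fun s hs => ?_
  have hvar : nndist (S : ℝ) s = NNReal.sqrt (1 - s / S) ^ 2 * S := by
    rw [NNReal.sq_sqrt, tsub_mul, one_mul, div_mul_cancel_of_imp (by rintro rfl; simpa using hs)]
    ext
    rw [coe_nndist, Real.dist_eq, NNReal.coe_sub hs, abs_of_nonneg (sub_nonneg.2 (mod_cast hs))]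
  have hlaw : P.map (B S - B s) = gaussianReal 0 (NNReal.sqrt (1 - s / S) ^ 2 * S) :=
    (hB.hasLaw_sub S s).map_eq.trans (congrArg _ hvar)
  calc P {ω | B S ω - B s ω < a - (a + NNReal.sqrt (1 - s / S) * d)}
      = (P.map (B S - B s)) (Iio (NNReal.sqrt (1 - s / S) * -d)) := by
        rw [Measure.map_apply ((hm S).sub (hm s)) measurableSet_Iio]
        simp [preimage]
    _ ≤ gaussianReal 0 S (Iio (-d)) := by
        rw [hlaw]
        exact gaussianReal_sq_mul_Iio_mul_le _ _ _

theorem measure_exists_lt_le_two_mul (hB : IsBrownianReal B P) (hm : ∀ t, Measurable (B t)) :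
    P {ω | ∃ s ≤ S, a < B s ω} ≤ 2 * gaussianReal 0 S (Ici a) := by
  have : IsProbabilityMeasure P := (hB.hasLaw_eval 0).isProbabilityMeasure
  set E := {ω | ∃ s ≤ S, a < B s ω}
  have hreflect : P (E ∩ {ω | B S ω < a}) ≤ P E / 2 := by
    have h := measure_exists_sqrt_barrier_lt_inter_lt_le hB hm (S := S) (a := a) 0
    simp only [mul_zero, add_zero, neg_zero] at h
    exact h.trans (by
      rw [div_eq_mul_inv, mul_comm (P E)]; gcongr; exact gaussianReal_Iio_zero_le_half S)
  have hend : P (E \ {ω | B S ω < a}) ≤ gaussianReal 0 S (Ici a) := by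
    rw [← (hB.hasLaw_eval S).map_eq, Measure.map_apply (hm S) measurableSet_Ici]
    exact measure_mono fun ω hω => mem_preimage.2 (mem_Ici.2 (not_lt.1 hω.2))
  have hhalf : P E / 2 + P E / 2 ≤ P E / 2 + gaussianReal 0 S (Ici a) := by
    rw [ENNReal.add_halves]
    exact (measure_le_inter_add_sdiff P E _).trans (add_le_add hreflect hend)
  rw [ENNReal.add_le_add_iff_left (by finiteness)] at hhalf
  rw [← ENNReal.mul_div_cancel (a := 2) (b := P E) (by simp) (by simp)]
  gcongr

end FirstPassage

section ExitTime

/-- The times at which the path `x` is at one of the endpoints of the interval `(qm, qp)`. -/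
def exitTimes (qm qp : ℝ) (x : ℝ → ℝ) : Set ℝ := {t | 0 ≤ t ∧ (x t = qm ∨ x t = qp)}

/-- The exit time of the path `x` from the interval `(qm, qp)`, with the junk value `0` for a path
that never exits. -/
noncomputable def exitTime (qm qp : ℝ) (x : ℝ → ℝ) : ℝ := sInf (exitTimes qm qp x)

/-- The path `x` leaves the interval `(qm, qp)`, and does so through `qp`. -/
def ExitsRight (qm qp : ℝ) (x : ℝ → ℝ) : Prop :=
  (exitTimes qm qp x).Nonempty ∧ x (exitTime qm qp x) = qp

variable {qm qp : ℝ} {x : ℝ → ℝ}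

theorem exitTime_nonneg : 0 ≤ exitTime qm qp x := Real.sInf_nonneg fun _ ht => ht.1

theorem exitTime_mem_exitTimes (hx : ContinuousOn x (Ici 0)) (hne : (exitTimes qm qp x).Nonempty) :
    exitTime qm qp x ∈ exitTimes qm qp x :=
  (hx.preimage_isClosed_of_isClosed isClosed_Ici (toFinite {qm, qp}).isClosed).csInf_mem hne
    ⟨0, fun _ ht => ht.1⟩

theorem exitsRight_of_forall_lt (hx : ContinuousOn x (Ici 0)) (hx0 : x 0 ≤ qp)
    (hqm : ∀ t, 0 ≤ t → qm < x t) {T : ℝ} (hT : 0 ≤ T) (hxT : qp ≤ x T) : ExitsRight qm qp x := by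
  obtain ⟨t, ht, hxt⟩ := intermediate_value_Icc hT (hx.mono Icc_subset_Ici_self) ⟨hx0, hxT⟩
  have hne : (exitTimes qm qp x).Nonempty := ⟨t, ht.1, .inr hxt⟩
  obtain ⟨h0, hleft | hright⟩ := exitTime_mem_exitTimes hx hne
  · exact absurd hleft (hqm _ h0).ne'
  · exact ⟨hne, hright⟩

end ExitTime

section UnstablePath

/-- The clock `∫₀ᵗ e^{-2 lam s} ds` of the noise in an Ornstein–Uhlenbeck equation with drift
`± lam * x`: the Brownian clock of the rescaled unstable coordinate, and also the variance of the
stable coordinate at time `t`. -/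
noncomputable def timeChange (lam t : ℝ) : ℝ := (1 - Real.exp (-(2 * lam * t))) / (2 * lam)

/-- The limit `1 / (2 * lam)` of the clock `timeChange lam` at infinity. -/
noncomputable def clockHorizon (lam : ℝ) : ℝ≥0 := (1 / (2 * lam)).toNNReal

/-- The path `X¹_ε` of the unstable coordinate driven by the Brownian path `b`. -/
noncomputable def unstablePath (lam x₁ ε : ℝ) (b : ℝ → ℝ) (t : ℝ) : ℝ :=
  Real.exp (lam * t) * (x₁ + ε * b (timeChange lam t))

variable {lam t : ℝ}

theorem continuous_timeChange (lam : ℝ) : Continuous (timeChange lam) := by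
  unfold timeChange
  fun_prop

theorem timeChange_zero (lam : ℝ) : timeChange lam 0 = 0 := by simp [timeChange]

theorem timeChange_nonneg (hlam : 0 < lam) (ht : 0 ≤ t) : 0 ≤ timeChange lam t := by
  have : Real.exp (-(2 * lam * t)) ≤ 1 := Real.exp_le_one_iff.2 (by nlinarith)
  exact div_nonneg (by linarith) (by linarith)

theorem tendsto_timeChange_atTop (hlam : 0 < lam) :
    Tendsto (timeChange lam) atTop (𝓝 (1 / (2 * lam))) := by
  have hexp : Tendsto (fun t => Real.exp (-(2 * lam * t))) atTop (𝓝 0) :=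
    Real.tendsto_exp_neg_atTop_nhds_zero.comp (tendsto_id.const_mul_atTop (by positivity))
  have hlim := (hexp.const_sub 1).div_const (2 * lam)
  rwa [sub_zero] at hlim

theorem coe_clockHorizon (hlam : 0 < lam) : (clockHorizon lam : ℝ) = 1 / (2 * lam) :=
  Real.coe_toNNReal _ (by positivity)

theorem clockHorizon_ne_zero (hlam : 0 < lam) : clockHorizon lam ≠ 0 :=
  (Real.toNNReal_pos.2 (by positivity)).ne'

theorem one_sub_timeChange_div_clockHorizon (hlam : 0 < lam) (t : ℝ) :
    1 - timeChange lam t / clockHorizon lam = Real.exp (-(lam * t)) ^ 2 := by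
  rw [coe_clockHorizon hlam, timeChange, ← Real.exp_nat_mul]
  field_simp
  ring_nf

theorem timeChange_le_clockHorizon (hlam : 0 < lam) (t : ℝ) :
    timeChange lam t ≤ clockHorizon lam := by
  have hpos : (0 : ℝ) < clockHorizon lam := NNReal.coe_pos.2 (clockHorizon_ne_zero hlam).bot_lt
  rw [← div_le_one hpos, ← sub_nonneg, one_sub_timeChange_div_clockHorizon hlam]
  positivity

variable {x₁ ε qm qp : ℝ} {b : ℝ → ℝ}

theorem continuousOn_unstablePath (hlam : 0 < lam) (hb : ContinuousOn b (Ici 0)) :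
    ContinuousOn (unstablePath lam x₁ ε b) (Ici 0) := by
  have hclock : ContinuousOn (fun t => b (timeChange lam t)) (Ici 0) :=
    hb.comp (continuous_timeChange lam).continuousOn fun t ht => timeChange_nonneg hlam ht
  exact (by fun_prop : Continuous fun t => Real.exp (lam * t)).continuousOn.mul
    (continuousOn_const.add (continuousOn_const.mul hclock))

theorem tendsto_unstablePath_atTop (hlam : 0 < lam) (hb : ContinuousOn b (Ici 0))
    (hend : 0 < x₁ + ε * b (clockHorizon lam)) :
    Tendsto (unstablePath lam x₁ ε b) atTop atTop := by
  have hclock : Tendsto (timeChange lam) atTop (𝓝[Ici 0] (clockHorizon lam : ℝ)) :=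
    tendsto_nhdsWithin_iff.2 ⟨coe_clockHorizon hlam ▸ tendsto_timeChange_atTop hlam,
      (eventually_ge_atTop 0).mono fun t ht => timeChange_nonneg hlam ht⟩
  have hb_lim := (hb _ (clockHorizon lam).coe_nonneg).tendsto.comp hclock
  exact (Real.tendsto_exp_atTop.comp (tendsto_id.const_mul_atTop hlam)).atTop_mul_pos hend
    ((hb_lim.const_mul ε).const_add x₁)

theorem exitsRight_unstablePath (hlam : 0 < lam) (hε : 0 < ε) (hx₁ : x₁ ≤ qp)
    (hb : ContinuousOn b (Ici 0)) (hb0 : b 0 = 0) {d : ℝ} (hd : ε * d < -qm)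
    (hend : -(x₁ / ε) < b (clockHorizon lam))
    (hbarrier : ∀ s ≤ clockHorizon lam,
      -(x₁ / ε) - NNReal.sqrt (1 - s / clockHorizon lam) * d ≤ b s) :
    ExitsRight qm qp (unstablePath lam x₁ ε b) := by
  have hexit_pos : 0 < x₁ + ε * b (clockHorizon lam) := by
    rw [neg_lt, ← sub_pos] at hend
    have := mul_pos hε hend
    field_simp at this
    linarith
  have hqm (t : ℝ) (ht : 0 ≤ t) : qm < unstablePath lam x₁ ε b t := by
    obtain ⟨s, hs⟩ : ∃ s : ℝ≥0, (s : ℝ) = timeChange lam t :=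
      CanLift.prf _ (timeChange_nonneg hlam ht)
    have hs_le : s ≤ clockHorizon lam := by
      exact_mod_cast hs ▸ timeChange_le_clockHorizon hlam t
    have hsqrt : (NNReal.sqrt (1 - s / clockHorizon lam) : ℝ) = Real.exp (-(lam * t)) := by
      rw [Real.coe_sqrt, NNReal.coe_sub (div_le_one_of_le₀ hs_le zero_le), NNReal.coe_div,
        NNReal.coe_one, hs, one_sub_timeChange_div_clockHorizon hlam, Real.sqrt_sq (by positivity)]
    have hb_le := hbarrier s hs_le
    rw [hsqrt, hs] at hb_le
    calc qm < -(ε * d) := by linarith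
      _ = Real.exp (lam * t) * (x₁ + ε * (-(x₁ / ε) - Real.exp (-(lam * t)) * d)) := by
        rw [Real.exp_neg]
        field_simp
        ring
      _ ≤ unstablePath lam x₁ ε b t := by unfold unstablePath; gcongr
  obtain ⟨T, hT, hqp⟩ := ((eventually_ge_atTop 0).and
    ((tendsto_unstablePath_atTop hlam hb hexit_pos).eventually_ge_atTop qp)).exists
  exact exitsRight_of_forall_lt (continuousOn_unstablePath hlam hb)
    (by simpa [unstablePath, timeChange_zero, hb0] using hx₁) hqm hT hqp

theorem exists_lt_of_exitsRight_unstablePath (hlam : 0 < lam) (hε : 0 < ε) (hqp : 0 < qp)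
    {T κ : ℝ} (hκ : κ < Real.exp (-(lam * T)) * qp)
    (hright : ExitsRight qm qp (unstablePath lam x₁ ε b))
    (hT : exitTime qm qp (unstablePath lam x₁ ε b) ≤ T) :
    ∃ s ≤ clockHorizon lam, -(x₁ / ε) + κ / ε < b s := by
  set τ := exitTime qm qp (unstablePath lam x₁ ε b)
  have hval : x₁ + ε * b (timeChange lam τ) = Real.exp (-(lam * τ)) * qp := by
    rw [← hright.2, unstablePath, ← mul_assoc, ← Real.exp_add]
    simp [τ]
  have hdecay : Real.exp (-(lam * T)) * qp ≤ Real.exp (-(lam * τ)) * qp := by gcongr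
  obtain ⟨s, hs⟩ : ∃ s : ℝ≥0, (s : ℝ) = timeChange lam τ :=
    CanLift.prf _ (timeChange_nonneg hlam exitTime_nonneg)
  refine ⟨s, by exact_mod_cast hs ▸ timeChange_le_clockHorizon hlam τ, ?_⟩
  rw [hs, ← neg_div, ← add_div, div_lt_iff₀ hε]
  linarith

end UnstablePath

section Measurability

theorem measurableSet_exists_mem_eq_zero {α X : Type*} [MeasurableSpace α] [PseudoMetricSpace X]
    {K : Set X} (hK : IsCompact K) {h : α → X → ℝ} (hmeas : ∀ t, Measurable fun a => h a t)
    (hcont : ∀ a, ContinuousOn (h a) K) : MeasurableSet {a | ∃ t ∈ K, h a t = 0} := by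
  obtain ⟨D, hDK, hD, hKD⟩ := hK.isSeparable.exists_countable_dense_subset
  have happrox : {a | ∃ t ∈ K, h a t = 0} = ⋂ n : ℕ, ⋃ t ∈ D, {a | |h a t| < 1 / (n + 1)} := by
    ext a
    simp only [mem_ofPred_eq, mem_iInter, mem_iUnion, exists_prop]
    refine ⟨fun ⟨t, ht, hzero⟩ n => ?_, fun happrox => ?_⟩
    · have hsmall : ∀ᶠ s in 𝓝[K] t, |h a s| < 1 / (n + 1) :=
        (hcont a t ht).abs.eventually_lt_const (by simp only [hzero, abs_zero]; positivity)
      obtain ⟨U, hU, htU, hUK⟩ := mem_nhdsWithin.1 hsmall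
      obtain ⟨s, hsU, hsD⟩ := mem_closure_iff.1 (hKD ht) U hU htU
      exact ⟨s, hsD, hUK ⟨hsU, hDK hsD⟩⟩
    · obtain ⟨s, hsD, -⟩ := happrox 0
      obtain ⟨t, ht, hmin⟩ := hK.exists_isMinOn ⟨s, hDK hsD⟩ (hcont a).abs
      refine ⟨t, ht, by_contra fun hne => ?_⟩
      obtain ⟨n, hn⟩ := exists_nat_one_div_lt (abs_pos.2 hne)
      obtain ⟨s, hsD, hs⟩ := happrox n
      exact (hs.trans hn).not_ge (hmin (hDK hsD))
  rw [happrox]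
  exact .iInter fun n => .biUnion hD fun t _ => measurableSet_lt (hmeas t).abs measurable_const

variable {α : Type*} [MeasurableSpace α] {x : α → ℝ → ℝ}

theorem measurable_eval_of_continuousOn (hmeas : ∀ t, Measurable fun a => x a t)
    (hcont : ∀ a, ContinuousOn (x a) (Ici 0)) {σ : α → ℝ} (hσ : Measurable σ) (hσ0 : ∀ a, 0 ≤ σ a) :
    Measurable fun a => x a (σ a) := by
  have hjoint : Measurable (Function.uncurry fun (t : ℝ) a => x a (max t 0)) :=
    measurable_uncurry_of_continuous_of_measurable
      (fun a => (hcont a).comp_continuous (by fun_prop) fun t => le_max_right t 0) fun t => hmeas _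
  simpa only [Function.comp_def, Function.uncurry, max_eq_left (hσ0 _), id] using
    hjoint.comp (hσ.prodMk measurable_id)

theorem measurableSet_exists_mem_exitTimes (qm qp : ℝ) (hmeas : ∀ t, Measurable fun a => x a t)
    (hcont : ∀ a, ContinuousOn (x a) (Ici 0)) (c : ℝ) :
    MeasurableSet {a | ∃ t ≤ c, t ∈ exitTimes qm qp (x a)} := by
  have hzero : {a | ∃ t ≤ c, t ∈ exitTimes qm qp (x a)} =
      {a | ∃ t ∈ Icc 0 c, (x a t - qm) * (x a t - qp) = 0} := by
    ext a
    simp only [exitTimes, mem_ofPred_eq, mem_Icc, mul_eq_zero, sub_eq_zero]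
    grind
  rw [hzero]
  refine measurableSet_exists_mem_eq_zero isCompact_Icc
    (fun t => ((hmeas t).sub_const qm).mul ((hmeas t).sub_const qp)) fun a => ?_
  have := (hcont a).mono (Icc_subset_Ici_self : Icc 0 c ⊆ Ici 0)
  fun_prop

theorem measurableSet_exitTimes_nonempty (qm qp : ℝ) (hmeas : ∀ t, Measurable fun a => x a t)
    (hcont : ∀ a, ContinuousOn (x a) (Ici 0)) :
    MeasurableSet {a | (exitTimes qm qp (x a)).Nonempty} := by
  have hunion : {a | (exitTimes qm qp (x a)).Nonempty} =
      ⋃ n : ℕ, {a | ∃ t ≤ (n : ℝ), t ∈ exitTimes qm qp (x a)} := by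
    ext a
    simp only [mem_ofPred_eq, mem_iUnion]
    exact ⟨fun ⟨t, ht⟩ => (exists_nat_ge t).imp fun n hn => ⟨t, hn, ht⟩,
      fun ⟨_, t, _, ht⟩ => ⟨t, ht⟩⟩
  rw [hunion]
  exact .iUnion fun n => measurableSet_exists_mem_exitTimes qm qp hmeas hcont n

theorem measurable_exitTime (qm qp : ℝ) (hmeas : ∀ t, Measurable fun a => x a t)
    (hcont : ∀ a, ContinuousOn (x a) (Ici 0)) : Measurable fun a => exitTime qm qp (x a) := by
  refine measurable_of_Iic fun c => ?_
  rcases lt_or_ge c 0 with hc | hc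
  · convert MeasurableSet.empty
    exact eq_empty_of_forall_notMem fun a ha => (ha.trans_lt hc).not_ge exitTime_nonneg
  · have hle : (fun a => exitTime qm qp (x a)) ⁻¹' Iic c =
        {a | (exitTimes qm qp (x a)).Nonempty}ᶜ ∪ {a | ∃ t ≤ c, t ∈ exitTimes qm qp (x a)} := by
      ext a
      simp only [mem_preimage, mem_Iic, mem_union, mem_compl_iff, mem_ofPred_eq]
      refine ⟨fun h => or_iff_not_imp_left.2 fun hne =>
        ⟨_, h, exitTime_mem_exitTimes (hcont a) (not_not.1 hne)⟩, ?_⟩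
      rintro (hempty | ⟨t, htc, ht⟩)
      · rwa [exitTime, not_nonempty_iff_eq_empty.1 hempty, Real.sInf_empty]
      · exact (csInf_le ⟨0, fun _ hs => hs.1⟩ ht).trans htc
    rw [hle]
    exact (measurableSet_exitTimes_nonempty qm qp hmeas hcont).compl.union
      (measurableSet_exists_mem_exitTimes qm qp hmeas hcont c)

theorem measurableSet_exitsRight (qm qp : ℝ) (hmeas : ∀ t, Measurable fun a => x a t)
    (hcont : ∀ a, ContinuousOn (x a) (Ici 0)) : MeasurableSet {a | ExitsRight qm qp (x a)} :=
  (measurableSet_exitTimes_nonempty qm qp hmeas hcont).inter <|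
    measurable_eval_of_continuousOn hmeas hcont (measurable_exitTime qm qp hmeas hcont)
      (fun _ => exitTime_nonneg) (measurableSet_singleton qp)

end Measurability

section WienerMeasure

/-- The space of paths on the half-line of nonnegative times that are continuous there, carrying the
`σ`-algebra generated by the coordinates. Paths take junk values at negative times, in line with
`IsBrownianMotion`. -/
abbrev ContinuousPath : Type := {b : ℝ → ℝ // ContinuousOn b (Ici 0)}

/-- `Q` is a Wiener measure: under `Q` the coordinate process is a standard Brownian motion. -/
def IsWienerMeasure (Q : Measure ContinuousPath) : Prop :=
  IsBrownianReal (fun (t : ℝ≥0) (b : ContinuousPath) => b.1 t) Q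

/-- The event `C_ε` on path space: the unstable coordinate exits `(qm, qp)`, through `qp`. -/
def rightExitPaths (lam x₁ qm qp ε : ℝ) : Set ContinuousPath :=
  {b | ExitsRight qm qp (unstablePath lam x₁ ε b)}

/-- The exit time `τ_ε` of the unstable coordinate on path space. -/
noncomputable def pathExitTime (lam x₁ qm qp ε : ℝ) (b : ContinuousPath) : ℝ :=
  exitTime qm qp (unstablePath lam x₁ ε b)

variable {lam x₁ qm qp ε : ℝ}

theorem measurable_coordinate (t : ℝ) : Measurable fun b : ContinuousPath => b.1 t :=
  (measurable_pi_apply t).comp measurable_subtype_coe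

theorem measurable_unstablePath (lam x₁ ε t : ℝ) :
    Measurable fun b : ContinuousPath => unstablePath lam x₁ ε b t :=
  ((measurable_coordinate _).const_mul ε |>.const_add x₁).const_mul _

theorem measurable_pathExitTime (hlam : 0 < lam) : Measurable (pathExitTime lam x₁ qm qp ε) :=
  measurable_exitTime qm qp (measurable_unstablePath lam x₁ ε) fun b =>
    continuousOn_unstablePath hlam b.2

theorem measurableSet_rightExitPaths (hlam : 0 < lam) :
    MeasurableSet (rightExitPaths lam x₁ qm qp ε) :=
  measurableSet_exitsRight qm qp (measurable_unstablePath lam x₁ ε) fun b =>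
    continuousOn_unstablePath hlam b.2

variable {Q : Measure ContinuousPath}

theorem IsWienerMeasure.isProbabilityMeasure (hQ : IsWienerMeasure Q) : IsProbabilityMeasure Q :=
  (hQ.hasLaw_eval 0).isProbabilityMeasure

theorem IsWienerMeasure.measure_lt (hQ : IsWienerMeasure Q) (t : ℝ≥0) (y : ℝ) :
    Q {b | y < b.1 t} = gaussianReal 0 t (Ioi y) := by
  have hlaw : Q.map (fun b => b.1 t) = gaussianReal 0 t := (hQ.hasLaw_eval t).map_eq
  rw [← hlaw, Measure.map_apply (measurable_coordinate t) measurableSet_Ioi]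
  rfl

theorem IsWienerMeasure.measure_rightExitPaths_inter_le (hQ : IsWienerMeasure Q) (hlam : 0 < lam)
    (hε : 0 < ε) (hx₁ : x₁ ≤ 0) (hqp : 0 < qp) {T κ : ℝ} (hκ : 0 ≤ κ)
    (hκT : κ < Real.exp (-(lam * T)) * qp) :
    Q (rightExitPaths lam x₁ qm qp ε ∩ {b | pathExitTime lam x₁ qm qp ε b ≤ T}) ≤
      2 * (ENNReal.ofReal (tailDecay (clockHorizon lam) (κ / ε)) *
        gaussianReal 0 (clockHorizon lam) (Ici (-(x₁ / ε)))) :=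
  calc Q (rightExitPaths lam x₁ qm qp ε ∩ {b | pathExitTime lam x₁ qm qp ε b ≤ T})
      ≤ Q {b | ∃ s ≤ clockHorizon lam, -(x₁ / ε) + κ / ε < b.1 s} := by
        exact measure_mono fun b ⟨hright, hT⟩ =>
          exists_lt_of_exitsRight_unstablePath hlam hε hqp hκT hright hT
    _ ≤ 2 * gaussianReal 0 (clockHorizon lam) (Ici (-(x₁ / ε) + κ / ε)) :=
        measure_exists_lt_le_two_mul hQ fun t => measurable_coordinate t
    _ ≤ 2 * (ENNReal.ofReal (tailDecay (clockHorizon lam) (κ / ε)) *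
        gaussianReal 0 (clockHorizon lam) (Ici (-(x₁ / ε)))) := by
        gcongr
        exact gaussianReal_Ici_add_le (clockHorizon_ne_zero hlam)
          (neg_nonneg.2 (div_nonpos_of_nonpos_of_nonneg hx₁ hε.le)) (by positivity)

theorem IsWienerMeasure.gaussianReal_Ici_le (hQ : IsWienerMeasure Q) (hlam : 0 < lam)
    (hε : 0 < ε) (hx₁ : x₁ ≤ 0) (hqp : 0 < qp) {δ : ℝ} (hδ : 0 ≤ δ) (hδqm : qm + δ < x₁) :
    gaussianReal 0 (clockHorizon lam) (Ici (-(x₁ / ε))) ≤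
      Q (rightExitPaths lam x₁ qm qp ε) +
        ENNReal.ofReal (tailDecay (clockHorizon lam) (δ / ε)) *
          gaussianReal 0 (clockHorizon lam) (Ici (-(x₁ / ε))) := by
  have := hQ.isProbabilityMeasure
  have := nullSingletonClass_gaussianReal (μ := 0) (clockHorizon_ne_zero hlam)
  set S := clockHorizon lam
  set d := -(x₁ / ε) + δ / ε
  let hits : Set ContinuousPath := {b | ∃ s ≤ S, x₁ / ε + NNReal.sqrt (1 - s / S) * d < -b.1 s}
  let ends : Set ContinuousPath := {b | -b.1 S < x₁ / ε}
  have hsplit : ends ≤ᵐ[Q] (rightExitPaths lam x₁ qm qp ε ∪ hits ∩ ends : Set ContinuousPath) := by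
    filter_upwards [hQ.eval_zero_ae_eq_zero] with b hb0 hend
    by_cases hhits : b ∈ hits
    · exact .inr ⟨hhits, hend⟩
    · refine .inl (exitsRight_unstablePath hlam hε (hx₁.trans hqp.le) b.2 hb0 (d := d) ?_
        (neg_lt.1 hend) fun s hs => ?_)
      · simp only [d]
        field_simp
        linarith
      · have := not_lt.1 fun hlt => hhits ⟨s, hs, hlt⟩
        linarith
  have hends : Q ends = gaussianReal 0 S (Ici (-(x₁ / ε))) := by
    rw [← measure_congr Ioi_ae_eq_Ici, ← hQ.measure_lt]
    simp only [ends, neg_lt]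
  have hbarrier : Q (hits ∩ ends) ≤ gaussianReal 0 S (Iio (-d)) :=
    (measure_exists_sqrt_barrier_lt_inter_lt_le hQ.neg
      (fun t => (measurable_coordinate t).neg) d).trans (mul_le_of_le_one_right' prob_le_one)
  calc gaussianReal 0 S (Ici (-(x₁ / ε)))
      ≤ Q (rightExitPaths lam x₁ qm qp ε) + gaussianReal 0 S (Iio (-d)) := by
        rw [← hends]
        exact (measure_mono_ae hsplit).trans
          ((measure_union_le _ _).trans (add_le_add_right hbarrier _))
    _ ≤ _ := by
        gcongr
        rw [gaussianReal_zero_Iio_neg]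
        exact (measure_mono Ioi_subset_Ici_self).trans
          (gaussianReal_Ici_add_le (clockHorizon_ne_zero hlam)
            (neg_nonneg.2 (div_nonpos_of_nonpos_of_nonneg hx₁ hε.le)) (by positivity))

theorem IsWienerMeasure.mul_measureReal_Ici_le (hQ : IsWienerMeasure Q) (hlam : 0 < lam)
    (hε : 0 < ε) (hx₁ : x₁ ≤ 0) (hqp : 0 < qp) {δ : ℝ} (hδ : 0 ≤ δ) (hδqm : qm + δ < x₁) :
    (1 - tailDecay (clockHorizon lam) (δ / ε)) *
        (gaussianReal 0 (clockHorizon lam)).real (Ici (-(x₁ / ε))) ≤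
      Q.real (rightExitPaths lam x₁ qm qp ε) := by
  have := hQ.isProbabilityMeasure
  have h := ENNReal.toReal_mono (by finiteness)
    (hQ.gaussianReal_Ici_le hlam hε hx₁ hqp hδ hδqm)
  rw [ENNReal.toReal_add (by finiteness) (by finiteness), ENNReal.toReal_mul,
    ENNReal.toReal_ofReal tailDecay_nonneg] at h
  simp only [measureReal_def]
  linarith

theorem IsWienerMeasure.measure_rightExitPaths_ne_zero (hQ : IsWienerMeasure Q) (hlam : 0 < lam)
    (hε : 0 < ε) (hx₁ : x₁ ≤ 0) (hqm : qm < x₁) (hqp : 0 < qp) :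
    Q (rightExitPaths lam x₁ qm qp ε) ≠ 0 := by
  intro hzero
  have hS := clockHorizon_ne_zero hlam
  have hg : 0 < (gaussianReal 0 (clockHorizon lam)).real (Ici (-(x₁ / ε))) :=
    ENNReal.toReal_pos (gaussianReal_Ici_pos hS _).ne' (by finiteness)
  have hle := hQ.mul_measureReal_Ici_le hlam hε hx₁ hqp (qm := qm) (δ := (x₁ - qm) / 2)
    (by linarith) (by linarith)
  have hlt := tailDecay_lt_one hS (div_pos (half_pos (sub_pos.2 hqm)) hε)
  rw [measureReal_def Q, hzero, ENNReal.toReal_zero] at hle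
  exact hle.not_gt (mul_pos (sub_pos.2 hlt) hg)

theorem IsWienerMeasure.cond_pathExitTime_le (hQ : IsWienerMeasure Q) (hlam : 0 < lam)
    (hε : 0 < ε) (hx₁ : x₁ ≤ 0) (hqp : 0 < qp) {T κ δ : ℝ} (hκ : 0 ≤ κ)
    (hκT : κ < Real.exp (-(lam * T)) * qp) (hδ : 0 < δ) (hδqm : qm + δ < x₁) :
    Q[|rightExitPaths lam x₁ qm qp ε].real {b | pathExitTime lam x₁ qm qp ε b ≤ T} ≤
      2 * tailDecay (clockHorizon lam) (κ / ε) /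
        (1 - tailDecay (clockHorizon lam) (δ / ε)) := by
  have := hQ.isProbabilityMeasure
  have hlate := hQ.mul_measureReal_Ici_le hlam hε hx₁ hqp hδ.le hδqm
  have hearly := ENNReal.toReal_mono (by finiteness)
    (hQ.measure_rightExitPaths_inter_le (qm := qm) hlam hε hx₁ hqp hκ hκT)
  rw [ENNReal.toReal_mul, ENNReal.toReal_mul, ENNReal.toReal_ofReal tailDecay_nonneg,
    ENNReal.toReal_ofNat] at hearly
  have hlt := tailDecay_lt_one (clockHorizon_ne_zero hlam) (div_pos hδ hε)
  have hpos : 0 < Q.real (rightExitPaths lam x₁ qm qp ε) := ENNReal.toReal_pos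
    (hQ.measure_rightExitPaths_ne_zero hlam hε hx₁ (by linarith) hqp) (by finiteness)
  rw [measureReal_def, cond_apply (measurableSet_rightExitPaths hlam), ENNReal.toReal_mul,
    ENNReal.toReal_inv, inv_mul_eq_div, ← measureReal_def Q (rightExitPaths _ _ _ _ _),
    div_le_div_iff₀ hpos (sub_pos.2 hlt)]
  calc _ ≤ 2 * (tailDecay (clockHorizon lam) (κ / ε) *
        (gaussianReal 0 (clockHorizon lam)).real (Ici (-(x₁ / ε)))) *
          (1 - tailDecay (clockHorizon lam) (δ / ε)) :=
        mul_le_mul_of_nonneg_right hearly (sub_nonneg.2 hlt.le)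
    _ = 2 * tailDecay (clockHorizon lam) (κ / ε) *
        ((1 - tailDecay (clockHorizon lam) (δ / ε)) *
          (gaussianReal 0 (clockHorizon lam)).real (Ici (-(x₁ / ε)))) := by ring
    _ ≤ _ := mul_le_mul_of_nonneg_left hlate (mul_nonneg zero_le_two tailDecay_nonneg)

theorem IsWienerMeasure.tendsto_cond_pathExitTime_le (hQ : IsWienerMeasure Q) (hlam : 0 < lam)
    (hx₁ : x₁ ≤ 0) (hqm : qm < x₁) (hqp : 0 < qp) (T : ℝ) :
    Tendsto (fun ε => Q[|rightExitPaths lam x₁ qm qp ε].real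
      {b | pathExitTime lam x₁ qm qp ε b ≤ T}) (𝓝[>] 0) (𝓝 0) := by
  have hS := clockHorizon_ne_zero hlam
  have hδ : 0 < (x₁ - qm) / 2 := half_pos (sub_pos.2 hqm)
  have hκ : 0 < Real.exp (-(lam * T)) * qp / 2 := by positivity
  have hbound := ((tendsto_tailDecay_div_nhdsGT hS hκ).const_mul 2).div
    ((tendsto_tailDecay_div_nhdsGT hS hδ).const_sub 1) (by simp)
  rw [mul_zero, zero_div] at hbound
  refine squeeze_zero' (.of_forall fun _ => measureReal_nonneg) ?_ hbound
  filter_upwards [self_mem_nhdsWithin] with ε hε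
  exact hQ.cond_pathExitTime_le hlam hε hx₁ hqp hκ.le (by linarith) hδ (by linarith)

end WienerMeasure

section Conditioning

variable {Ω α β : Type*} [MeasurableSpace Ω] [MeasurableSpace α] [MeasurableSpace β]
  {P : Measure Ω}

theorem cond_congr_ae {s t : Set Ω} (hst : s =ᵐ[P] t) : P[|s] = P[|t] := by
  rw [ProbabilityTheory.cond, ProbabilityTheory.cond, measure_congr hst,
    Measure.restrict_congr_set hst]

theorem map_prodMk_cond_preimage_eq_prod [IsFiniteMeasure P] {W : Ω → α} {V : Ω → β}
    (hW : Measurable W) (hV : Measurable V) (hWV : IndepFun W V P) {R : Set α}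
    (hR : MeasurableSet R) :
    (P[|W ⁻¹' R]).map (fun ω => (W ω, V ω)) = ((P.map W)[|R]).prod (P.map V) := by
  have hpre : W ⁻¹' R = (fun ω => (W ω, V ω)) ⁻¹' R ×ˢ univ := by
    ext
    simp
  simp only [ProbabilityTheory.cond]
  rw [Measure.map_smul, Measure.prod_smul_left, Measure.map_apply hW hR]
  nth_rewrite 2 [hpre]
  rw [← Measure.restrict_map (hW.prodMk hV) (hR.prod .univ),
    (indepFun_iff_map_prod_eq_prod_map_map hW.aemeasurable hV.aemeasurable).1 hWV,
    ← Measure.prod_restrict, Measure.restrict_univ]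

theorem tendsto_integral_comp_of_tendsto_measure_le {ι : Type*} {l : Filter ι}
    {Q : ι → Measure Ω} (hQ : ∀ᶠ i in l, IsProbabilityMeasure (Q i)) {τ : ι → Ω → ℝ}
    (hτ : ∀ i, Measurable (τ i)) {G : ℝ → ℝ} (hG : Measurable G) {M c : ℝ} (hM : ∀ t, ‖G t‖ ≤ M)
    (hGc : Tendsto G atTop (𝓝 c))
    (hT : ∀ T, Tendsto (fun i => (Q i).real {ω | τ i ω ≤ T}) l (𝓝 0)) :
    Tendsto (fun i => ∫ ω, G (τ i ω) ∂Q i) l (𝓝 c) := by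
  rw [Metric.tendsto_nhds]
  intro δ hδ
  obtain ⟨T, hTδ⟩ := eventually_atTop.1 (Metric.tendsto_nhds.1 hGc (δ / 2) (half_pos hδ))
  have hsmall : ∀ᶠ i in l, (M + ‖c‖) * (Q i).real {ω | τ i ω ≤ T} < δ / 2 := by
    have h := (hT T).const_mul (M + ‖c‖)
    rw [mul_zero] at h
    exact h.eventually (gt_mem_nhds (half_pos hδ))
  filter_upwards [hQ, hsmall] with i hi hsmall
  have hset : MeasurableSet {ω | τ i ω ≤ T} := measurableSet_le (hτ i) measurable_const
  have hint : Integrable (fun ω => G (τ i ω)) (Q i) :=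
    .of_bound (hG.comp (hτ i)).aestronglyMeasurable M (ae_of_all _ fun ω => hM _)
  have hbound : Integrable ({ω | τ i ω ≤ T}.indicator fun _ => M + ‖c‖) (Q i) :=
    (integrable_const _).indicator hset
  rw [dist_eq_norm]
  calc ‖∫ ω, G (τ i ω) ∂Q i - c‖ = ‖∫ ω, (G (τ i ω) - c) ∂Q i‖ := by
        rw [integral_sub hint (integrable_const _)]
        simp
    _ ≤ ∫ ω, (δ / 2 + {ω | τ i ω ≤ T}.indicator (fun _ => M + ‖c‖) ω) ∂Q i := by
        refine norm_integral_le_of_norm_le ((integrable_const _).add hbound)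
          (ae_of_all _ fun ω => ?_)
        by_cases hω : τ i ω ≤ T
        · rw [indicator_of_mem (by exact hω)]
          linarith [norm_sub_le (G (τ i ω)) c, hM (τ i ω)]
        · rw [indicator_of_notMem (by exact hω), add_zero, ← dist_eq_norm]
          exact (hTδ _ (not_le.1 hω).le).le
    _ = δ / 2 + (M + ‖c‖) * (Q i).real {ω | τ i ω ≤ T} := by
        rw [integral_add (integrable_const _) hbound, integral_indicator_const _ hset]
        simp [mul_comm]
    _ < δ := by linarith

end Conditioning

section GaussianAverage

theorem integral_gaussianReal_zero_eq (f : ℝ →ᵇ ℝ) (v : ℝ≥0) :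
    ∫ x, f x ∂gaussianReal 0 v = ∫ z, f (NNReal.sqrt v * z) ∂gaussianReal 0 1 := by
  have hstd : gaussianReal 0 v = (gaussianReal 0 1).map ((NNReal.sqrt v : ℝ) * ·) := by
    rw [gaussianReal_map_const_mul, mul_zero, mul_one]
    congr 1
    ext
    simp
  rw [hstd, integral_map (by fun_prop) f.continuous.aestronglyMeasurable]

theorem norm_integral_gaussianReal_le (f : ℝ →ᵇ ℝ) (v : ℝ≥0) :
    ‖∫ x, f x ∂gaussianReal 0 v‖ ≤ ‖f‖ := by
  simpa using norm_integral_le_of_norm_le_const (μ := gaussianReal 0 v)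
    (ae_of_all _ f.norm_coe_le_norm)

theorem continuous_integral_gaussianReal_zero (f : ℝ →ᵇ ℝ) :
    Continuous fun v : ℝ≥0 => ∫ x, f x ∂gaussianReal 0 v := by
  simp only [integral_gaussianReal_zero_eq]
  exact continuous_of_dominated (bound := fun _ => ‖f‖)
    (fun v => (by fun_prop : Continuous fun z => f (NNReal.sqrt v * z)).aestronglyMeasurable)
    (fun v => ae_of_all _ fun z => f.norm_coe_le_norm _)
    (integrable_const _) (ae_of_all _ fun z => by fun_prop)

theorem integral_div_sqrt_eq_integral_gaussianReal {Ω : Type*} [MeasurableSpace Ω]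
    {P : Measure Ω} {N : Ω → ℝ} (hN : P.map N = gaussianReal 0 1) (f : ℝ →ᵇ ℝ) (r : ℝ) :
    ∫ ω, f (N ω / √r) ∂P = ∫ x, f x ∂gaussianReal 0 (1 / r).toNNReal := by
  have hNm : AEMeasurable N P := by
    by_contra h
    exact IsProbabilityMeasure.ne_zero (gaussianReal 0 1)
      (hN ▸ Measure.map_of_not_aemeasurable h)
  rw [integral_gaussianReal_zero_eq, ← hN, integral_map hNm
    (by fun_prop : Continuous fun z => f (NNReal.sqrt (1 / r).toNNReal * z)).aestronglyMeasurable]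
  congr 1 with ω
  rw [div_eq_inv_mul, ← Real.sqrt_inv, ← one_div, Real.sqrt]

end GaussianAverage

section StableNoise

/-- The normalised noise contribution `J_ε / ε` to the stable coordinate at time `t`, as a function
of the noise path `b`. -/
noncomputable def stableNoise (mu t : ℝ) (b : ℝ → ℝ) : ℝ :=
  Real.exp (-(mu * t)) * b ((Real.exp (2 * mu * t) - 1) / (2 * mu))

variable {mu : ℝ}

theorem stableNoise_time_nonneg (hmu : 0 < mu) {t : ℝ} (ht : 0 ≤ t) :
    0 ≤ (Real.exp (2 * mu * t) - 1) / (2 * mu) :=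
  div_nonneg (sub_nonneg.2 (Real.one_le_exp (by positivity))) (by positivity)

theorem measurable_stableNoise (hmu : 0 < mu) {α : Type*} [MeasurableSpace α] {T : α → ℝ}
    (hT : Measurable T) (hT0 : ∀ a, 0 ≤ T a) :
    Measurable fun p : α × ContinuousPath => stableNoise mu (T p.1) p.2.1 := by
  have hT' : Measurable fun p : α × ContinuousPath => T p.1 := hT.comp measurable_fst
  exact (hT'.const_mul mu).neg.exp.mul <| measurable_eval_of_continuousOn
    (fun t => (measurable_coordinate t).comp measurable_snd) (fun p => p.2.2)
    (((hT'.const_mul (2 * mu)).exp.sub_const 1).div_const (2 * mu))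
    fun p => stableNoise_time_nonneg hmu (hT0 p.1)

variable {Q₁ Q₂ : Measure ContinuousPath}

theorem IsWienerMeasure.map_stableNoise (hQ₂ : IsWienerMeasure Q₂) (hmu : 0 < mu) {t : ℝ}
    (ht : 0 ≤ t) :
    Q₂.map (fun b => stableNoise mu t b.1) = gaussianReal 0 (timeChange mu t).toNNReal := by
  obtain ⟨r, hr⟩ : ∃ r : ℝ≥0, (r : ℝ) = (Real.exp (2 * mu * t) - 1) / (2 * mu) :=
    CanLift.prf _ (stableNoise_time_nonneg hmu ht)
  have hlaw : Q₂.map (fun b => b.1 r) = gaussianReal 0 r := (hQ₂.hasLaw_eval r).map_eq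
  have hcomp : (fun b : ContinuousPath => stableNoise mu t b.1) =
      (Real.exp (-(mu * t)) * ·) ∘ fun b => b.1 r := by
    ext b
    rw [stableNoise, ← hr, Function.comp_apply]
  have hsq : Real.exp (-(mu * t)) ^ 2 = Real.exp (-(2 * mu * t)) := by
    rw [← Real.exp_nat_mul]
    push_cast
    ring_nf
  rw [hcomp, ← Measure.map_map (measurable_const_mul _) (measurable_coordinate r), hlaw,
    gaussianReal_map_const_mul, mul_zero]
  congr 1
  ext
  rw [Real.coe_toNNReal _ (timeChange_nonneg hmu ht), NNReal.coe_mul, NNReal.coe_mk, hr,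
    ← mul_div_assoc, mul_sub, hsq, ← Real.exp_add, neg_add_cancel, Real.exp_zero, mul_one,
    timeChange]

theorem integral_stableNoise_prod (hQ₂ : IsWienerMeasure Q₂) (hmu : 0 < mu) {α : Type*}
    [MeasurableSpace α] {Q : Measure α} [IsFiniteMeasure Q] {T : α → ℝ} (hT : Measurable T)
    (hT0 : ∀ a, 0 ≤ T a) (f : ℝ →ᵇ ℝ) :
    ∫ p, f (stableNoise mu (T p.1) p.2.1) ∂Q.prod Q₂ =
      ∫ a, ∫ x, f x ∂gaussianReal 0 (timeChange mu (T a)).toNNReal ∂Q := by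
  have := hQ₂.isProbabilityMeasure
  have hmeas := f.continuous.measurable.comp (measurable_stableNoise hmu hT hT0)
  rw [integral_prod (fun p : α × ContinuousPath => f (stableNoise mu (T p.1) p.2.1))
    (.of_bound hmeas.aestronglyMeasurable ‖f‖ (ae_of_all _ fun p => f.norm_coe_le_norm _))]
  congr 1 with a
  have hnoise : Measurable fun b : ContinuousPath => stableNoise mu (T a) b.1 :=
    (measurable_stableNoise hmu hT hT0).comp measurable_prodMk_left
  rw [← hQ₂.map_stableNoise hmu (hT0 a),
    integral_map hnoise.aemeasurable f.continuous.aestronglyMeasurable]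

theorem IsWienerMeasure.tendsto_integral_stableNoise_pathExitTime {lam x₁ qm qp : ℝ}
    (hQ₁ : IsWienerMeasure Q₁) (hQ₂ : IsWienerMeasure Q₂) (hlam : 0 < lam) (hmu : 0 < mu)
    (hqm : qm < x₁) (hx₁ : x₁ ≤ 0) (hqp : 0 < qp) (f : ℝ →ᵇ ℝ) :
    Tendsto (fun ε => ∫ p, f (stableNoise mu (pathExitTime lam x₁ qm qp ε p.1) p.2.1)
      ∂(Q₁[|rightExitPaths lam x₁ qm qp ε]).prod Q₂) (𝓝[>] 0)
      (𝓝 (∫ x, f x ∂gaussianReal 0 (clockHorizon mu))) := by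
  have := hQ₁.isProbabilityMeasure
  simp only [integral_stableNoise_prod hQ₂ hmu (measurable_pathExitTime hlam)
    (fun _ => exitTime_nonneg)]
  have hcont := continuous_integral_gaussianReal_zero f
  have hprob : ∀ᶠ ε in 𝓝[>] (0 : ℝ),
      IsProbabilityMeasure Q₁[|rightExitPaths lam x₁ qm qp ε] := by
    filter_upwards [self_mem_nhdsWithin] with ε hε
    exact cond_isProbabilityMeasure
      (hQ₁.measure_rightExitPaths_ne_zero hlam hε hx₁ hqm hqp)
  exact tendsto_integral_comp_of_tendsto_measure_le hprob
    (fun ε => measurable_pathExitTime hlam)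
    (hcont.comp (continuous_real_toNNReal.comp (continuous_timeChange mu))).measurable
    (M := ‖f‖) (fun t => norm_integral_gaussianReal_le f _)
    ((hcont.tendsto _).comp ((continuous_real_toNNReal.tendsto _).comp
      (tendsto_timeChange_atTop hmu)))
    (hQ₁.tendsto_cond_pathExitTime_le hlam hx₁ hqm hqp)

end StableNoise

section PathRepresentation

variable {Ω : Type*} [MeasurableSpace Ω] {P : Measure Ω}

theorem IsBrownianMotion.isPreBrownianReal_s16 {B : ℝ → Ω → ℝ} (hB : IsBrownianMotion P B) :
    IsPreBrownianReal (fun (t : ℝ≥0) => B t) P := by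
  obtain ⟨hmeas, hcont, hlaw, hind⟩ := hB
  refine HasIndepIncrements.isPreBrownianReal_of_hasLaw (fun t => ⟨(hmeas t).aemeasurable, ?_⟩)
    (HasIndepIncrements.of_nat fun t ht _ => hind (fun i => t i)
      (fun i j h => by exact_mod_cast ht h) fun i => (t i).2)
  have h := hlaw 0 t le_rfl t.2
  rw [sub_zero, Real.toNNReal_coe] at h
  rw [← h]
  refine Measure.map_congr ?_
  filter_upwards [hcont] with ω hω
  simp [hω.1]

theorem exists_measurable_continuousPath {B : ℝ → Ω → ℝ} (hmeas : ∀ t, Measurable (B t))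
    (hcont : ∀ᵐ ω ∂P, ContinuousOn (fun t => B t ω) (Ici 0)) :
    ∃ W : Ω → ContinuousPath, Measurable W ∧ ∀ᵐ ω ∂P, (W ω).1 = fun t => B t ω := by
  classical
  obtain ⟨s, hsub, hs, hPs⟩ := exists_measurable_superset_of_null hcont
  have hpath : ∀ ω, ContinuousOn (fun t => sᶜ.indicator (B t) ω) (Ici 0) := fun ω => by
    by_cases hω : ω ∈ s
    · simpa [hω] using continuousOn_const
    · simpa [hω] using not_not.1 fun h => hω (hsub h)
  refine ⟨fun ω => ⟨fun t => sᶜ.indicator (B t) ω, hpath ω⟩, .subtype_mk <|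
    measurable_pi_lambda _ fun t => (hmeas t).indicator hs.compl, ?_⟩
  filter_upwards [measure_eq_zero_iff_ae_notMem.1 hPs] with ω hω
  ext t
  exact indicator_of_mem hω _

theorem IsBrownianMotion.isWienerMeasure_map {B : ℝ → Ω → ℝ} (hB : IsBrownianMotion P B)
    {W : Ω → ContinuousPath} (hW : Measurable W) (hWB : ∀ᵐ ω ∂P, (W ω).1 = fun t => B t ω) :
    IsWienerMeasure (P.map W) := by
  refine ⟨⟨fun I => ?_⟩, ae_of_all _ fun b => by
    exact b.2.comp_continuous NNReal.continuous_coe fun t => t.2⟩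
  have hmeas : Measurable fun b : ContinuousPath => I.restrict fun t : ℝ≥0 => b.1 t :=
    measurable_pi_lambda _ fun t => measurable_coordinate t
  refine ⟨hmeas.aemeasurable, ?_⟩
  rw [← (hB.isPreBrownianReal_s16.hasLaw I).map_eq, Measure.map_map hmeas hW]
  refine Measure.map_congr ?_
  filter_upwards [hWB] with ω hω
  simp only [Function.comp_apply, hω]

theorem indepFun_of_ae_coe_eq {W V : Ω → ContinuousPath} {B B' : ℝ → Ω → ℝ}
    (hWB : ∀ᵐ ω ∂P, (W ω).1 = fun t => B t ω) (hVB' : ∀ᵐ ω ∂P, (V ω).1 = fun t => B' t ω)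
    (hBB' : IndepFun (fun ω t => B t ω) (fun ω t => B' t ω) P) : IndepFun W V P := by
  have h := hBB'.congr (hWB.mono fun _ => Eq.symm) (hVB'.mono fun _ => Eq.symm)
  rw [IndepFun_iff_Indep] at h ⊢
  simpa only [Subtype.instMeasurableSpace, MeasurableSpace.comap_comp, Function.comp_def] using h

theorem IsBrownianMotion.tendsto_integral_stableNoise_cond_exitsRight {B₁ B₂ : ℝ → Ω → ℝ}
    (hB₁ : IsBrownianMotion P B₁) (hB₂ : IsBrownianMotion P B₂)
    (hB₁₂ : IndepFun (fun ω t => B₁ t ω) (fun ω t => B₂ t ω) P) {lam mu x₁ qm qp : ℝ}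
    (hlam : 0 < lam) (hmu : 0 < mu) (hqm : qm < x₁) (hx₁ : x₁ ≤ 0) (hqp : 0 < qp) (f : ℝ →ᵇ ℝ) :
    Tendsto (fun ε => ∫ ω, f (stableNoise mu
        (exitTime qm qp (unstablePath lam x₁ ε fun t => B₁ t ω)) fun t => B₂ t ω)
      ∂P[|{ω | ExitsRight qm qp (unstablePath lam x₁ ε fun t => B₁ t ω)}]) (𝓝[>] 0)
      (𝓝 (∫ x, f x ∂gaussianReal 0 (clockHorizon mu))) := by
  have := (hB₁.isPreBrownianReal_s16.hasLaw_eval 0).isProbabilityMeasure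
  obtain ⟨W, hW, hWB⟩ := exists_measurable_continuousPath hB₁.1 (hB₁.2.1.mono fun _ h => h.2)
  obtain ⟨V, hV, hVB⟩ := exists_measurable_continuousPath hB₂.1 (hB₂.2.1.mono fun _ h => h.2)
  have hlim := (hB₁.isWienerMeasure_map hW hWB).tendsto_integral_stableNoise_pathExitTime
    (hB₂.isWienerMeasure_map hV hVB) hlam hmu hqm hx₁ hqp f
  refine hlim.congr fun ε => ?_
  have hevent : {ω | ExitsRight qm qp (unstablePath lam x₁ ε fun t => B₁ t ω)} =ᵐ[P]
      W ⁻¹' rightExitPaths lam x₁ qm qp ε := by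
    filter_upwards [hWB] with ω hω
    change ExitsRight _ _ _ = ExitsRight _ _ _
    rw [hω]
  have hmeas : Measurable fun p : ContinuousPath × ContinuousPath =>
      f (stableNoise mu (pathExitTime lam x₁ qm qp ε p.1) p.2.1) :=
    f.continuous.measurable.comp <|
      measurable_stableNoise hmu (measurable_pathExitTime hlam) fun _ => exitTime_nonneg
  rw [cond_congr_ae hevent, ← map_prodMk_cond_preimage_eq_prod hW hV
    (indepFun_of_ae_coe_eq hWB hVB hB₁₂) (measurableSet_rightExitPaths hlam),
    integral_map (hW.prodMk hV).aemeasurable hmeas.aestronglyMeasurable]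
  refine integral_congr_ae (cond_absolutelyContinuous.ae_le ?_)
  filter_upwards [hWB, hVB] with ω hω hω'
  rw [pathExitTime, hω, hω']

end PathRepresentation

theorem noise_contribution_scaling_limit_general
    {Ω : Type*} [MeasurableSpace Ω] (P : Measure Ω)
    (B1 B2 : ℝ → Ω → ℝ) (hB1 : IsBrownianMotion P B1) (hB2 : IsBrownianMotion P B2)
    (hB12 : IndepFun (fun ω => fun t : ℝ => B1 t ω) (fun ω => fun t : ℝ => B2 t ω) P)
    (lam mu x₁ qm qp : ℝ) (hlam : 0 < lam) (hmu : 0 < mu)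
    (hqm : qm < x₁) (hx₁ : x₁ ≤ 0) (hqp : 0 < qp)
    (X1 : ℝ → ℝ → Ω → ℝ)
    (hX1 : ∀ ε t ω, X1 ε t ω
      = Real.exp (lam * t) * (x₁ + ε * B1 ((1 - Real.exp (-(2 * lam * t))) / (2 * lam)) ω))
    (τ : ℝ → Ω → ℝ)
    (hτ : ∀ ε ω, τ ε ω = sInf {t | 0 ≤ t ∧ (X1 ε t ω = qm ∨ X1 ε t ω = qp)})
    (C : ℝ → Set Ω)
    (hC : ∀ ε, C ε
      = {ω | {t | 0 ≤ t ∧ (X1 ε t ω = qm ∨ X1 ε t ω = qp)}.Nonempty ∧ X1 ε (τ ε ω) ω = qp})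
    (J : ℝ → Ω → ℝ)
    (hJ : ∀ ε ω, J ε ω = ε * Real.exp (-(mu * τ ε ω))
      * B2 ((Real.exp (2 * mu * τ ε ω) - 1) / (2 * mu)) ω)
    {Ω' : Type*} [MeasurableSpace Ω'] (P' : Measure Ω')
    (N : Ω' → ℝ) (hN : Measure.map N P' = gaussianReal 0 1) :
    ∀ f : BoundedContinuousFunction ℝ ℝ,
      Tendsto
        (fun ε : ℝ => ∫ ω, f (J ε ω / ε) ∂(P[|C ε]))
        (𝓝[>] 0)
        (𝓝 (∫ ω', f (N ω' / Real.sqrt (2 * mu)) ∂P')) := by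
  intro f
  have hX : ∀ ε ω, (fun t => X1 ε t ω) = unstablePath lam x₁ ε fun t => B1 t ω :=
    fun ε ω => funext fun t => hX1 ε t ω
  have hτX : ∀ ε ω, τ ε ω = exitTime qm qp (unstablePath lam x₁ ε fun t => B1 t ω) :=
    fun ε ω => hX ε ω ▸ hτ ε ω
  have hCX : ∀ ε, C ε = {ω | ExitsRight qm qp (unstablePath lam x₁ ε fun t => B1 t ω)} := by
    intro ε
    simp only [hC, hτ, ← hX]
    rfl
  have hJX : ∀ ε > 0, ∀ ω, J ε ω / ε = stableNoise mu (τ ε ω) fun t => B2 t ω := by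
    intro ε hε ω
    rw [hJ, mul_assoc, mul_div_cancel_left₀ _ hε.ne', stableNoise]
  have hlim := hB1.tendsto_integral_stableNoise_cond_exitsRight hB2 hB12 hlam hmu hqm hx₁ hqp f
  rw [integral_div_sqrt_eq_integral_gaussianReal hN]
  refine hlim.congr' ?_
  filter_upwards [self_mem_nhdsWithin] with ε hε
  simp only [hJX ε hε, hτX, hCX]

/-- With `J_ε = ε e^{-μ τ_ε} B²((e^{2μ τ_ε} - 1)/(2μ))` (the noise contribution to
`X²_ε(τ_ε)`), the conditional law `Law[J_ε/ε | C_ε]` converges weakly, as `ε → 0⁺`, to the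
law of `N/√(2μ)` with `N` standard Gaussian. -/
theorem noise_contribution_scaling_limit
    {Ω : Type*} [MeasurableSpace Ω] (P : Measure Ω) [IsProbabilityMeasure P]
    (hPc : P.IsComplete)
    (B1 B2 : ℝ → Ω → ℝ) (hB1 : IsBrownianMotion P B1) (hB2 : IsBrownianMotion P B2)
    (hB12 : IndepFun (fun ω => fun t : ℝ => B1 t ω) (fun ω => fun t : ℝ => B2 t ω) P)
    (lam mu al x₁ qm qp : ℝ) (hlam : 0 < lam) (hmu : 0 < mu)
    (hqm : qm < x₁) (hx₁ : x₁ < 0) (hqp : 0 < qp)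
    (ξ : ℝ → Ω → ℝ) (hξmeas : ∀ ε, Measurable (ξ ε))
    (hξindep : ∀ ε, IndepFun (ξ ε) (fun ω => fun t : ℝ => (B1 t ω, B2 t ω)) P)
    (ν : Measure ℝ) [IsProbabilityMeasure ν] (hν0 : ν {0} < 1)
    (hξconv : ∀ g : BoundedContinuousFunction ℝ ℝ,
      Tendsto (fun ε : ℝ => ∫ ω, g (ξ ε ω) ∂P) (𝓝[>] 0) (𝓝 (∫ x, g x ∂ν)))
    (X1 : ℝ → ℝ → Ω → ℝ)
    (hX1 : ∀ ε t ω, X1 ε t ω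
      = Real.exp (lam * t) * (x₁ + ε * B1 ((1 - Real.exp (-(2 * lam * t))) / (2 * lam)) ω))
    (τ : ℝ → Ω → ℝ)
    (hτ : ∀ ε ω, τ ε ω = sInf {t | 0 ≤ t ∧ (X1 ε t ω = qm ∨ X1 ε t ω = qp)})
    (C : ℝ → Set Ω)
    (hC : ∀ ε, C ε
      = {ω | {t | 0 ≤ t ∧ (X1 ε t ω = qm ∨ X1 ε t ω = qp)}.Nonempty ∧ X1 ε (τ ε ω) ω = qp})
    (J : ℝ → Ω → ℝ)
    (hJ : ∀ ε ω, J ε ω = ε * Real.exp (-(mu * τ ε ω))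
      * B2 ((Real.exp (2 * mu * τ ε ω) - 1) / (2 * mu)) ω)
    -- `N` is a standard Gaussian random variable on an auxiliary probability space
    {Ω' : Type*} [MeasurableSpace Ω'] (P' : Measure Ω') [IsProbabilityMeasure P']
    (N : Ω' → ℝ) (hN : Measure.map N P' = gaussianReal 0 1) :
    ∀ f : BoundedContinuousFunction ℝ ℝ,
      Tendsto
        (fun ε : ℝ => ∫ ω, f (J ε ω / ε) ∂(P[|C ε]))
        (𝓝[>] 0)
        (𝓝 (∫ ω', f (N ω' / Real.sqrt (2 * mu)) ∂P')) :=
  noise_contribution_scaling_limit_general P B1 B2 hB1 hB2 hB12 lam mu x₁ qm qp hlam hmu hqm hx₁.le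
    hqp X1 hX1 τ hτ C hC J hJ P' N hN
end
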